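/- arXiv:1304.3223 — 6 statements merged into one kernel-verified Lean document; each statement's English description precedes it below -/
import Mathlib

section
/- For every real number z and every real number θ, the Jacobi–Anger expansion holds: e^{i z cos θ} = J_0(z) + 2 ∑_{n=1}^∞ i^n J_n(z) cos(nθ), where the series on the right-hand side converges (in the sense that the family (2 i^n J_n(z) cos(nθ))_{n≥1} has sum e^{i z cos θ} − J_0(z) in ℂ). -/
/-!
The function `x ↦ e^{i z sin x}` is smooth and `2π`-periodic. Its `n`-th Fourier coefficient is
`(1/2π) ∫_{-π}^{π} e^{-i (n x - z sin x)} dx`, and since the phase `n x - z sin x` is odd this equals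
`(1/π) ∫_0^π cos (n x - z sin x) dx`, i.e. `J_n z` (`fourierCoeff_expSin`). Two integrations by
parts bound the coefficients by `C / n ^ 2` (`summable_fourierCoeff_expSin`), so the Fourier series
converges absolutely and pointwise to the function. Evaluating at `x = θ + π / 2` turns `sin x` into
`cos θ` and produces the factors `iⁿ`; the terms `n` and `-n` are then paired by means of
`J_{-n} = (-1)ⁿ J_n` (`besselZ_neg`).
-/

open Real Complex

/-- Bessel function of the first kind of integer order `n`, via the
integral representation `J_n(x) = (1/π) ∫_0^π cos (n θ - x sin θ) dθ`. -/
noncomputable def besselJ (n : ℕ) (x : ℝ) : ℝ :=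
  (1 / Real.pi) * ∫ θ in (0:ℝ)..Real.pi, Real.cos (n * θ - x * Real.sin θ)

/-- The Bessel function of integer order `n`, given by the same integral as `besselJ`. -/
noncomputable def besselZ (n : ℤ) (z : ℝ) : ℝ :=
  (1 / Real.pi) * ∫ x in (0:ℝ)..Real.pi, Real.cos (n * x - z * Real.sin x)

lemma besselZ_natCast (n : ℕ) (z : ℝ) : besselZ n z = besselJ n z := by
  simp [besselZ, besselJ]

/-- The parity relation `J_{-n} = (-1)ⁿ J_n`, from the substitution `x ↦ π - x`. -/
lemma besselZ_neg (n : ℕ) (z : ℝ) : besselZ (-n) z = (-1) ^ n * besselZ n z := by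
  unfold besselZ
  have h := intervalIntegral.integral_comp_sub_left (a := 0) (b := Real.pi) (d := Real.pi)
    (f := fun x : ℝ => Real.cos (((-n : ℤ) : ℝ) * x - z * Real.sin x))
  simp only [sub_self, sub_zero] at h
  rw [← h, mul_left_comm, ← intervalIntegral.integral_const_mul ((-1 : ℝ) ^ n)]
  congr 1
  refine intervalIntegral.integral_congr fun x _ => ?_
  have e : ((-n : ℤ) : ℝ) * (Real.pi - x) - z * Real.sin (Real.pi - x)
      = ((n : ℤ) * x - z * Real.sin x) - n * Real.pi := by
    rw [Real.sin_pi_sub]; push_cast; ring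
  simp only [e, Real.cos_sub_nat_mul_pi]

/-- The function `e^{i z sin x}` on the circle `ℝ / 2πℤ`. -/
noncomputable def expSin (z : ℝ) : C(AddCircle (2 * Real.pi), ℂ) where
  toFun x := Complex.exp (Complex.I * (z * (Real.Angle.sin x : ℝ)))
  continuous_toFun := by
    have : Continuous (fun x : AddCircle (2 * Real.pi) => Real.Angle.sin x) :=
      Real.Angle.continuous_sin
    fun_prop

lemma expSin_coe (z x : ℝ) :
    expSin z (x : AddCircle (2 * Real.pi)) = Complex.exp (Complex.I * (z * (Real.sin x : ℝ))) :=
  rfl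

instance fact_two_pi_pos : Fact (0 < 2 * Real.pi) := ⟨Real.two_pi_pos⟩

lemma fourier_two_pi (n : ℤ) (x : ℝ) :
    fourier n (x : AddCircle (2 * Real.pi)) = Complex.exp (Complex.I * (n * x)) := by
  rw [fourier_coe_apply]
  congr 1
  have : (Real.pi : ℂ) ≠ 0 := by exact_mod_cast Real.pi_ne_zero
  push_cast
  field_simp

lemma fourierCoeff_expSin_eq_integral (n : ℤ) (z : ℝ) :
    fourierCoeff (expSin z) n = (1 / (2 * Real.pi) : ℝ) •
      ∫ x in (-Real.pi)..Real.pi, Complex.exp (-(Complex.I * n) * x) *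
        Complex.exp (Complex.I * (z * (Real.sin x : ℝ))) := by
  rw [fourierCoeff_eq_intervalIntegral _ n (-Real.pi)]
  rw [show -Real.pi + 2 * Real.pi = Real.pi by ring]
  congr 1
  refine intervalIntegral.integral_congr fun x _ => ?_
  simp only [fourier_two_pi, expSin_coe, smul_eq_mul]
  congr 2
  push_cast
  ring

/-- The Fourier coefficients of `e^{i z sin x}` are Bessel functions: folding the integral over
`[-π, π]` onto `[0, π]` pairs conjugate exponentials, because the phase is odd. -/
lemma fourierCoeff_expSin (n : ℤ) (z : ℝ) :
    fourierCoeff (expSin z) n = (besselZ n z : ℂ) := by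
  rw [fourierCoeff_expSin_eq_integral]
  set F : ℝ → ℂ := fun x => Complex.exp (-(Complex.I * n) * x) *
        Complex.exp (Complex.I * (z * (Real.sin x : ℝ))) with hF
  have hFc : Continuous F := by fun_prop
  have hI : ∀ a b, IntervalIntegrable F MeasureTheory.volume a b :=
    fun a b => hFc.intervalIntegrable a b
  have hneg : ∫ x in (-Real.pi)..0, F x = ∫ x in (0:ℝ)..Real.pi, F (-x) := by
    rw [intervalIntegral.integral_comp_neg]; simp
  rw [← intervalIntegral.integral_add_adjacent_intervals (hI _ 0) (hI _ _), hneg,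
    ← intervalIntegral.integral_add
      (f := fun x => F (-x)) ((hFc.comp continuous_neg).intervalIntegrable _ _) (hI _ _)]
  have hsum : ∀ x : ℝ, F (-x) + F x
      = 2 * ((Real.cos (n * x - z * Real.sin x) : ℝ) : ℂ) := by
    intro x
    rw [Complex.ofReal_cos, Complex.two_cos, hF]
    simp only [← Complex.exp_add, Real.sin_neg]
    congr 2 <;> push_cast <;> ring
  simp only [hsum]
  rw [intervalIntegral.integral_const_mul, intervalIntegral.integral_ofReal, besselZ,
    Complex.real_smul]
  have : (Real.pi : ℂ) ≠ 0 := by exact_mod_cast Real.pi_ne_zero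
  push_cast
  field_simp

/-- Integration by parts against `e^{-i n x}` over a full period. The boundary terms cancel
because `u` takes equal values at `±π`. -/
lemma integral_exp_mul_deriv (n : ℤ) {u u' : ℝ → ℂ} (hu : ∀ x, HasDerivAt u (u' x) x)
    (hu' : Continuous u') (hper : u (-Real.pi) = u Real.pi) :
    ∫ x in (-Real.pi)..Real.pi, Complex.exp (-(Complex.I * n) * x) * u' x
      = Complex.I * n * ∫ x in (-Real.pi)..Real.pi, Complex.exp (-(Complex.I * n) * x) * u x := by
  have he : ∀ x : ℝ, HasDerivAt (fun x : ℝ => Complex.exp (-(Complex.I * n) * x))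
      (-(Complex.I * n) * Complex.exp (-(Complex.I * n) * x)) x := by
    intro x
    have h1 : HasDerivAt (fun x : ℝ => -(Complex.I * n) * (x : ℂ)) (-(Complex.I * n)) x := by
      simpa using (Complex.ofRealCLM.hasDerivAt (x := x)).const_mul (-(Complex.I * n))
    simpa [mul_comm] using h1.cexp
  rw [intervalIntegral.integral_mul_deriv_eq_deriv_mul (fun x _ => he x) (fun x _ => hu x)
    (Continuous.intervalIntegrable (by fun_prop) _ _) (hu'.intervalIntegrable _ _)]
  have hb : Complex.exp (-(Complex.I * n) * (Real.pi : ℝ))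
      = Complex.exp (-(Complex.I * n) * ((-Real.pi : ℝ) : ℂ)) := by
    rw [Complex.exp_eq_exp_iff_exists_int]
    exact ⟨-n, by push_cast; ring⟩
  rw [hb, hper, sub_self, zero_sub, ← intervalIntegral.integral_neg,
    ← intervalIntegral.integral_const_mul]
  refine intervalIntegral.integral_congr fun x _ => ?_
  ring

lemma summable_fourierCoeff_expSin (z : ℝ) : Summable (fourierCoeff (expSin z)) := by
  -- `u`, `u₁`, `u₂` are `e^{i z sin x}` and its first two derivatives
  set u : ℝ → ℂ := fun x => Complex.exp (Complex.I * (z * (Real.sin x : ℝ))) with hu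
  set u₁ : ℝ → ℂ := fun x => u x * (Complex.I * (z * (Real.cos x : ℝ))) with hu₁
  set u₂ : ℝ → ℂ := fun x => u₁ x * (Complex.I * (z * (Real.cos x : ℝ))) +
    u x * (Complex.I * (z * (-Real.sin x : ℝ))) with hu₂
  have hd : ∀ x, HasDerivAt u (u₁ x) x := fun x =>
    (((Real.hasDerivAt_sin x).ofReal_comp.const_mul (z : ℂ)).const_mul Complex.I).cexp
  have hd₁ : ∀ x, HasDerivAt u₁ (u₂ x) x := fun x =>
    (hd x).mul (((Real.hasDerivAt_cos x).ofReal_comp.const_mul (z : ℂ)).const_mul Complex.I)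
  have hc : Continuous u := by fun_prop
  have hc₁ : Continuous u₁ := by fun_prop
  have hc₂ : Continuous u₂ := by fun_prop
  have hparts : ∀ n : ℤ, (∫ x in (-Real.pi)..Real.pi, Complex.exp (-(Complex.I * n) * x) * u₂ x)
      = -(n : ℂ) ^ 2 * ∫ x in (-Real.pi)..Real.pi, Complex.exp (-(Complex.I * n) * x) * u x := by
    intro n
    rw [integral_exp_mul_deriv n hd₁ hc₂ (by simp [hu₁, hu]),
      integral_exp_mul_deriv n hd hc₁ (by simp [hu]), ← mul_assoc]
    congr 1
    linear_combination (n : ℂ) ^ 2 * Complex.I_sq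
  set C : ℝ := 1 / (2 * Real.pi) * ∫ x in (-Real.pi)..Real.pi, ‖u₂ x‖ with hC
  refine Summable.of_norm_bounded_eventually
    ((Real.summable_one_div_int_pow.mpr one_lt_two).mul_left C) ?_
  filter_upwards [(Set.finite_singleton (0 : ℤ)).compl_mem_cofinite] with n hn
  have hn0 : (n : ℝ) ≠ 0 := by exact_mod_cast hn
  have hn2 : 0 < (n : ℝ) ^ 2 := by positivity
  have hle : (-Real.pi) ≤ Real.pi := by linarith [Real.pi_pos]
  have hb : ‖∫ x in (-Real.pi)..Real.pi, Complex.exp (-(Complex.I * n) * x) * u₂ x‖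
      ≤ ∫ x in (-Real.pi)..Real.pi, ‖u₂ x‖ := by
    refine (intervalIntegral.norm_integral_le_integral_norm hle).trans_eq ?_
    refine intervalIntegral.integral_congr fun x _ => ?_
    simp [Complex.norm_exp]
  rw [hparts, norm_mul, norm_neg, norm_pow, Complex.norm_intCast, sq_abs] at hb
  rw [fourierCoeff_expSin_eq_integral, norm_smul, Real.norm_of_nonneg (by positivity), hC,
    mul_assoc]
  refine mul_le_mul_of_nonneg_left ?_ (by positivity)
  rw [mul_one_div, le_div_iff₀ hn2, mul_comm]
  exact hb

/-- Jacobi–Anger expansion: `e^{i z cos θ} = J_0 z + 2 ∑_{n ≥ 1} iⁿ Jₙ(z) cos (n θ)`,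
stated as: the family `(2 iⁿ Jₙ(z) cos (n θ))_{n ≥ 1}` has sum
`e^{i z cos θ} - J_0 z` in `ℂ`. -/
theorem jacobi_anger (z θ : ℝ) :
    HasSum (fun n : ℕ =>
        (2 : ℂ) * Complex.I ^ (n + 1) * (besselJ (n + 1) z : ℂ) *
          (Real.cos ((n + 1) * θ) : ℂ))
      (Complex.exp (Complex.I * (z * Real.cos θ)) - (besselJ 0 z : ℂ)) := by
  have h := has_pointwise_sum_fourier_series_of_summable (summable_fourierCoeff_expSin z)
    ((θ + Real.pi / 2 : ℝ) : AddCircle (2 * Real.pi))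
  simp only [fourierCoeff_expSin, fourier_two_pi, expSin_coe, smul_eq_mul,
    Real.sin_add_pi_div_two] at h
  have hpair := h.nat_add_neg
  rw [← hasSum_nat_add_iff' 1] at hpair
  have h0 : besselZ 0 z = besselJ 0 z := by simpa using besselZ_natCast 0 z
  have hval : ∀ w : ℂ, w + (besselZ 0 z : ℂ) *
      Complex.exp (Complex.I * (((0 : ℤ) : ℂ) * ((θ + Real.pi / 2 : ℝ) : ℂ))) -
      ∑ i ∈ Finset.range 1, ((besselZ (i : ℤ) z : ℂ) *
          Complex.exp (Complex.I * (((i : ℤ) : ℂ) * ((θ + Real.pi / 2 : ℝ) : ℂ))) +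
        (besselZ (-(i : ℤ)) z : ℂ) *
          Complex.exp (Complex.I * (((-(i : ℤ) : ℤ) : ℂ) * ((θ + Real.pi / 2 : ℝ) : ℂ))))
      = w - (besselJ 0 z : ℂ) := by
    intro w
    simp [h0]
  rw [hval] at hpair
  refine (congrArg (fun f => HasSum f _) (funext fun n => ?_)).mpr hpair
  have hI : Complex.exp (Complex.I * (Real.pi / 2)) = Complex.I := by
    rw [mul_comm]; exact Complex.exp_pi_div_two_mul_I
  have hpos : Complex.exp (Complex.I * (((n + 1 : ℕ) : ℂ) * (θ + Real.pi / 2)))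
      = Complex.I ^ (n + 1) * Complex.exp (((n + 1 : ℕ) * θ) * Complex.I) := by
    rw [← hI, ← Complex.exp_nat_mul, ← Complex.exp_add, hI]
    congr 1; ring
  have hneg : Complex.exp (Complex.I * (-((n + 1 : ℕ) : ℂ) * (θ + Real.pi / 2)))
      = (-Complex.I) ^ (n + 1) * Complex.exp (-((n + 1 : ℕ) * θ) * Complex.I) := by
    rw [← Complex.inv_I, inv_pow, ← hI, ← Complex.exp_nat_mul, ← Complex.exp_neg,
      ← Complex.exp_add, hI]
    congr 1; ring
  have hcos := Complex.two_cos (((n + 1 : ℕ) : ℂ) * θ)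
  have hsgn : (-1 : ℂ) ^ (n + 1) * (-Complex.I) ^ (n + 1) = Complex.I ^ (n + 1) := by
    rw [← mul_pow]; simp
  rw [besselZ_neg, besselZ_natCast]
  push_cast at hpos hneg hcos ⊢
  rw [hpos, hneg]
  linear_combination (Complex.I ^ (n + 1) * (besselJ (n + 1) z : ℂ)) * hcos -
    (besselJ (n + 1) z : ℂ) * Complex.exp (-((n + 1) * θ) * Complex.I) * hsgn
end

section
/- Let α < β be real numbers and let z be a real number. Then ∫_α^β e^{i z cos θ} dθ = (β−α) J_0(z) + 4 ∑_{n=1}^∞ (i^n / n) J_n(z) sin(n(β−α)/2) cos(n(β+α)/2), where the series on the right-hand side converges in ℂ. -/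
/-!
The function `θ ↦ e^{i z cos θ}` is smooth and `2π`-periodic, so its Fourier series converges
absolutely and uniformly to it. The theorem is this series, integrated term by term over `[α, β]`.

The Fourier coefficients are even in `n` (`cosExpCoeff_neg`), and for `n ≥ 0` the shift
`θ ↦ θ + π/2` identifies them with `iⁿ Jₙ(z)` (`cosExpCoeff_eq_besselJ`). Integrating by parts twice
bounds them by `C / n²` (`norm_cosExpCoeff_le`), which gives absolute convergence. Pairing `n` with
`-n` yields the Jacobi–Anger expansion `hasSum_jacobiAnger`; dominated convergence
together with `sin (nβ) - sin (nα) = 2 sin (n(β-α)/2) cos (n(β+α)/2)` then gives the formula.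
-/

open Real Complex

lemma hasSum_of_hasSum_of_eq {f g : ℕ → ℂ} {a b : ℂ} (h : HasSum g b) (hf : ∀ n, f n = g n)
    (hab : a = b) : HasSum f a := by
  rwa [hab, funext hf]

/-- The unnormalised Fourier coefficient `∫_{-π}^{π} e^{i z cos θ} e^{i n θ} dθ`. -/
noncomputable def cosExpCoeff (z : ℝ) (n : ℤ) : ℂ :=
  ∫ θ in (-Real.pi)..Real.pi,
    Complex.exp (Complex.I * (z * Real.cos θ)) * Complex.exp (n * Complex.I * θ)

lemma cosExpCoeff_neg (z : ℝ) (n : ℤ) : cosExpCoeff z (-n) = cosExpCoeff z n := by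
  have h := intervalIntegral.integral_comp_neg (a := -Real.pi) (b := Real.pi)
    (fun θ : ℝ => Complex.exp (Complex.I * (z * Real.cos θ)) * Complex.exp (n * Complex.I * θ))
  rw [neg_neg] at h
  rw [cosExpCoeff, cosExpCoeff, ← h]
  refine intervalIntegral.integral_congr fun θ _ => ?_
  simp

/-- Translating by `π / 2` turns `cos` into `-sin` and extracts the factor `iⁿ`. -/
lemma cosExpCoeff_eq_integral_sin (z : ℝ) (n : ℕ) :
    cosExpCoeff z n = Complex.I ^ n * ∫ θ in (-Real.pi)..Real.pi,
      Complex.exp (((n * θ - z * Real.sin θ : ℝ) : ℂ) * Complex.I) := by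
  set g : ℝ → ℂ := fun θ =>
    Complex.exp (Complex.I * (z * Real.cos θ)) * Complex.exp (((n : ℤ) : ℂ) * Complex.I * θ) with hg
  have hper : Function.Periodic g (2 * Real.pi) := by
    intro θ
    simp only [hg, Real.cos_add_two_pi]
    congr 1
    rw [Complex.exp_eq_exp_iff_exists_int]
    exact ⟨n, by push_cast; ring⟩
  have h1 := hper.intervalIntegral_add_eq (-Real.pi) (-Real.pi + Real.pi / 2)
  rw [show -Real.pi + 2 * Real.pi = Real.pi by ring,
    show -Real.pi + Real.pi / 2 + 2 * Real.pi = Real.pi + Real.pi / 2 by ring,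
    ← intervalIntegral.integral_comp_add_right] at h1
  rw [cosExpCoeff, h1, ← intervalIntegral.integral_const_mul]
  refine intervalIntegral.integral_congr fun θ _ => ?_
  simp only [hg, Real.cos_add_pi_div_two]
  have hI : Complex.I ^ n = Complex.exp (n * (Real.pi / 2 * Complex.I)) := by
    rw [Complex.exp_nat_mul, Complex.exp_pi_div_two_mul_I]
  rw [hI, ← Complex.exp_add, ← Complex.exp_add]
  congr 1
  push_cast
  ring

/-- `cosExpCoeff z n` is `2π iⁿ Jₙ(z)`. -/
lemma cosExpCoeff_eq_besselJ (z : ℝ) (n : ℕ) :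
    cosExpCoeff z n = 2 * Real.pi * (Complex.I ^ n * (besselJ n z : ℂ)) := by
  rw [cosExpCoeff_eq_integral_sin]
  set h : ℝ → ℂ := fun θ =>
    Complex.exp (((n * θ - z * Real.sin θ : ℝ) : ℂ) * Complex.I) with hh
  have hc : Continuous h := by fun_prop
  have hcn : Continuous fun θ => h (-θ) := hc.comp continuous_neg
  have hneg := intervalIntegral.integral_comp_neg (a := 0) (b := Real.pi) h
  rw [neg_zero] at hneg
  have key : ∫ θ in (-Real.pi)..Real.pi, h θ =
      2 * ((∫ θ in (0 : ℝ)..Real.pi, Real.cos (n * θ - z * Real.sin θ) : ℝ) : ℂ) := by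
    rw [← intervalIntegral.integral_add_adjacent_intervals
      (hc.intervalIntegrable (-Real.pi) 0) (hc.intervalIntegrable 0 Real.pi), ← hneg,
      ← intervalIntegral.integral_add
        (f := fun θ => h (-θ)) (hcn.intervalIntegrable 0 Real.pi) (hc.intervalIntegrable 0 Real.pi),
      ← intervalIntegral.integral_ofReal, ← intervalIntegral.integral_const_mul]
    refine intervalIntegral.integral_congr fun θ _ => ?_
    simp only [hh, Complex.ofReal_cos, Complex.two_cos, Real.sin_neg]
    rw [add_comm]
    congr 2
    push_cast
    ring
  rw [key, besselJ]
  have : (Real.pi : ℂ) ≠ 0 := by exact_mod_cast Real.pi_ne_zero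
  push_cast
  field_simp

/-- Two integrations by parts, done at once by exhibiting a `2π`-periodic primitive of
`e^{inθ} (n² f + f'')` with `f θ = e^{i z cos θ}`. -/
lemma norm_cosExpCoeff_le (z : ℝ) (n : ℤ) :
    (n : ℝ) ^ 2 * ‖cosExpCoeff z n‖ ≤ (|z| + z ^ 2) * (2 * Real.pi) := by
  set f : ℝ → ℂ := fun θ => Complex.exp (Complex.I * (z * Real.cos θ)) with hf
  set e : ℝ → ℂ := fun θ => Complex.exp (n * Complex.I * θ) with he
  set f2 : ℝ → ℂ := fun θ =>
    (-(Complex.I * z * Real.cos θ) - (z * Real.sin θ) ^ 2) * f θ with hf2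
  have hfd (θ : ℝ) : HasDerivAt f (-(Complex.I * z * Real.sin θ) * f θ) θ := by
    have := ((((Real.hasDerivAt_cos θ).ofReal_comp).const_mul (z : ℂ)).const_mul Complex.I).cexp
    convert this using 1
    simp only [hf]
    push_cast
    ring
  have hed (θ : ℝ) : HasDerivAt e (n * Complex.I * e θ) θ := by
    have := ((Complex.ofRealCLM.hasDerivAt (x := θ)).const_mul ((n : ℂ) * Complex.I)).cexp
    refine HasDerivAt.congr_deriv (f := e) this ?_
    simp only [he, Complex.ofRealCLM_apply, Complex.ofReal_one, mul_one]
    ring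
  have hG (θ : ℝ) : HasDerivAt
      (fun θ : ℝ => e θ * (-(Complex.I * z * Real.sin θ) * f θ - n * Complex.I * f θ))
      ((n : ℂ) ^ 2 * (f θ * e θ) + f2 θ * e θ) θ := by
    have hs := ((((Real.hasDerivAt_sin θ).ofReal_comp).const_mul (Complex.I * z)).neg).mul (hfd θ)
    have := (hed θ).mul (hs.sub ((hfd θ).const_mul ((n : ℂ) * Complex.I)))
    refine HasDerivAt.congr_deriv this ?_
    simp only [hf2, Pi.neg_apply, Pi.sub_apply, Pi.mul_apply]
    linear_combination (-(n : ℂ) ^ 2 * f θ * e θ + (z * Real.sin θ) ^ 2 * f θ * e θ)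
      * Complex.I_sq
  have hfc : Continuous f := by fun_prop
  have hec : Continuous e := by fun_prop
  have hf2c : Continuous f2 := by fun_prop
  have hftc := intervalIntegral.integral_eq_sub_of_hasDerivAt (a := -Real.pi) (b := Real.pi)
    (fun θ _ => hG θ) (Continuous.intervalIntegrable (by fun_prop) _ _)
  have hepi : e Real.pi = e (-Real.pi) := by
    simp only [he]
    rw [Complex.exp_eq_exp_iff_exists_int]
    exact ⟨n, by push_cast; ring⟩
  have hfpi : f Real.pi = f (-Real.pi) := by simp [hf]
  rw [hepi, hfpi, Real.sin_neg, Real.sin_pi, neg_zero, sub_self,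
    intervalIntegral.integral_add (Continuous.intervalIntegrable (by fun_prop) _ _)
      (Continuous.intervalIntegrable (by fun_prop) _ _),
    intervalIntegral.integral_const_mul] at hftc
  have hK : (n : ℂ) ^ 2 * cosExpCoeff z n = -∫ θ in (-Real.pi)..Real.pi, f2 θ * e θ :=
    eq_neg_of_add_eq_zero_left hftc
  have hb : ‖∫ θ in (-Real.pi)..Real.pi, f2 θ * e θ‖ ≤
      (|z| + z ^ 2) * |Real.pi - -Real.pi| := by
    refine intervalIntegral.norm_integral_le_of_norm_le_const fun θ _ => ?_
    have h1 : ‖f θ‖ = 1 := by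
      simp only [hf]
      rw [← Complex.ofReal_mul, mul_comm, Complex.norm_exp_ofReal_mul_I]
    have h2 : ‖e θ‖ = 1 := by
      simp only [he]
      rw [show (n : ℂ) * Complex.I * θ = ((n * θ : ℝ) : ℂ) * Complex.I by push_cast; ring,
        Complex.norm_exp_ofReal_mul_I]
    simp only [hf2, norm_mul, h1, h2, mul_one]
    refine (norm_sub_le _ _).trans (add_le_add ?_ ?_)
    · simp only [norm_neg, norm_mul, Complex.norm_I, one_mul, Complex.norm_real, Real.norm_eq_abs]
      exact mul_le_of_le_one_right (abs_nonneg _) (Real.abs_cos_le_one θ)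
    · simp only [norm_pow, norm_mul, Complex.norm_real, Real.norm_eq_abs, mul_pow, sq_abs]
      exact mul_le_of_le_one_right (sq_nonneg _) (Real.sin_sq_le_one θ)
  have := congrArg norm hK
  rw [norm_neg, norm_mul, norm_pow, Complex.norm_intCast, sq_abs] at this
  rw [this]
  refine hb.trans_eq ?_
  rw [sub_neg_eq_add, ← two_mul, abs_of_pos Real.two_pi_pos]

lemma summable_cosExpCoeff (z : ℝ) : Summable (cosExpCoeff z) := by
  have h : Summable fun n : ℤ => ((|z| + z ^ 2) * (2 * Real.pi)) * (1 / (n : ℝ) ^ 2) :=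
    (Real.summable_one_div_int_pow.2 one_lt_two).mul_left _
  -- the bound `C / n²` is only meaningful for `n ≠ 0`
  refine Summable.of_norm_bounded_eventually h ?_
  filter_upwards [(Set.finite_singleton (0 : ℤ)).compl_mem_cofinite] with n hn
  have hn' : (n : ℝ) ≠ 0 := by simpa using hn
  have : 0 < (n : ℝ) ^ 2 := by positivity
  rw [mul_one_div, le_div_iff₀ this, mul_comm]
  exact norm_cosExpCoeff_le z n

/-- The Jacobi–Anger expansion in real form:
`e^{i z cos θ} - J₀(z) = ∑_{n ≥ 1} 2 iⁿ Jₙ(z) cos (n θ)`. -/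
lemma hasSum_jacobiAnger (z θ : ℝ) :
    HasSum (fun n : ℕ => 2 * (Complex.I ^ (n + 1) * (besselJ (n + 1) z : ℂ)) *
        (Real.cos ((n + 1) * θ) : ℂ))
      (Complex.exp (Complex.I * (z * Real.cos θ)) - (besselJ 0 z : ℂ)) := by
  have : Fact (0 < 2 * Real.pi) := ⟨Real.two_pi_pos⟩
  have hpi : (Real.pi : ℂ) ≠ 0 := by exact_mod_cast Real.pi_ne_zero
  -- `Real.Angle` is `AddCircle (2 * π)`, which provides `cos` as a function on the circle
  let F : C(AddCircle (2 * Real.pi), ℂ) :=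
    ⟨fun x => Complex.exp (Complex.I * (z * (Real.Angle.cos x : ℝ))), by
      have : Continuous fun x : AddCircle (2 * Real.pi) => Real.Angle.cos x :=
        Real.Angle.continuous_cos
      fun_prop⟩
  have hF (x : ℝ) : F (x : AddCircle (2 * Real.pi)) =
      Complex.exp (Complex.I * (z * Real.cos x)) := rfl
  have hfour (n : ℤ) (x : ℝ) : fourier n (x : AddCircle (2 * Real.pi)) =
      Complex.exp (n * Complex.I * x) := by
    rw [fourier_coe_apply]
    congr 1
    push_cast
    field_simp
  have hcoeff (n : ℤ) : fourierCoeff F n = (2 * Real.pi)⁻¹ * cosExpCoeff z n := by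
    rw [fourierCoeff_eq_intervalIntegral F n (-Real.pi), ← cosExpCoeff_neg, cosExpCoeff,
      show -Real.pi + 2 * Real.pi = Real.pi by ring, Complex.real_smul]
    congr 1
    · push_cast
      simp
    · refine intervalIntegral.integral_congr fun x _ => ?_
      simp only [hF, hfour, smul_eq_mul]
      rw [mul_comm]
  have hsum : Summable (fourierCoeff F) := by
    rw [funext hcoeff]
    exact (summable_cosExpCoeff z).mul_left _
  have hpt := has_pointwise_sum_fourier_series_of_summable hsum (θ : AddCircle (2 * Real.pi))
  have hnat := (hasSum_nat_add_iff' 1).2 hpt.nat_add_neg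
  simp only [hcoeff, hF, hfour, smul_eq_mul] at hnat
  have h0 : cosExpCoeff z 0 = 2 * Real.pi * (besselJ 0 z : ℂ) := by
    simpa using cosExpCoeff_eq_besselJ z 0
  refine hasSum_of_hasSum_of_eq hnat (fun n => ?_) ?_
  · rw [cosExpCoeff_neg, cosExpCoeff_eq_besselJ, ← mul_add, Complex.ofReal_cos,
      mul_comm 2 (_ * _), mul_assoc, Complex.two_cos]
    congr 1
    · push_cast
      field_simp
    · congr 2 <;> · push_cast; ring
  · simp [h0]
    field_simp

/-- `∫_α^β e^{i z cos θ} dθ = (β-α) J_0(z)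
    + 4 ∑_{n ≥ 1} (iⁿ/n) Jₙ(z) sin (n(β-α)/2) cos (n(β+α)/2)`,
stated as: the series (family over `n ≥ 1`) has sum
`∫_α^β e^{i z cos θ} dθ - (β-α) J_0(z)` in `ℂ`. -/
theorem integral_exp_cos_eq (α β z : ℝ) (hαβ : α < β) :
    HasSum (fun n : ℕ =>
        (4 : ℂ) * Complex.I ^ (n + 1) / ((n : ℂ) + 1) * (besselJ (n + 1) z : ℂ) *
          (Real.sin ((n + 1) * (β - α) / 2) : ℂ) *
          (Real.cos ((n + 1) * (β + α) / 2) : ℂ))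
      ((∫ θ in α..β, Complex.exp (Complex.I * (z * Real.cos θ)))
        - ((β : ℂ) - (α : ℂ)) * (besselJ 0 z : ℂ)) := by
  have hpi : (Real.pi : ℂ) ≠ 0 := by exact_mod_cast Real.pi_ne_zero
  set c : ℕ → ℂ := fun n => 2 * (Complex.I ^ (n + 1) * (besselJ (n + 1) z : ℂ)) with hc
  have hcs : Summable fun n => ‖c n‖ := by
    have h1 : Summable fun n : ℕ => cosExpCoeff z ((n + 1 : ℕ) : ℤ) :=
      (summable_cosExpCoeff z).comp_injective
        (Nat.cast_injective.comp (add_left_injective 1))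
    refine ((h1.mul_left (Real.pi : ℂ)⁻¹).congr fun n => ?_).norm
    rw [cosExpCoeff_eq_besselJ, hc]
    field_simp
  have hI := intervalIntegral.hasSum_integral_of_dominated_convergence
    (μ := MeasureTheory.volume) (a := α) (b := β)
    (F := fun n θ => c n * (Real.cos ((n + 1) * θ) : ℂ))
    (f := fun θ : ℝ => Complex.exp (Complex.I * (z * Real.cos θ)) - (besselJ 0 z : ℂ))
    (fun n _ => ‖c n‖)
    (fun n => Continuous.aestronglyMeasurable (by fun_prop))
    (fun n => Filter.Eventually.of_forall fun θ _ => by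
      rw [norm_mul, Complex.norm_real, Real.norm_eq_abs]
      exact mul_le_of_le_one_right (norm_nonneg _) (Real.abs_cos_le_one _))
    (Filter.Eventually.of_forall fun _ _ => hcs)
    intervalIntegrable_const
    (Filter.Eventually.of_forall fun θ _ => hasSum_jacobiAnger z θ)
  refine hasSum_of_hasSum_of_eq hI (fun n => ?_) ?_
  · have hn : (n : ℝ) + 1 ≠ 0 := by positivity
    have hn' : (n : ℂ) + 1 ≠ 0 := by exact_mod_cast hn
    rw [intervalIntegral.integral_const_mul, intervalIntegral.integral_ofReal,
      intervalIntegral.integral_comp_mul_left (fun x => Real.cos x) hn, integral_cos,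
      Real.sin_sub_sin, ← mul_sub, ← mul_add, hc]
    simp only [smul_eq_mul, Complex.ofReal_mul, Complex.ofReal_inv]
    push_cast
    field_simp
    ring
  · rw [intervalIntegral.integral_sub (Continuous.intervalIntegrable (by fun_prop) _ _)
      intervalIntegrable_const, intervalIntegral.integral_const, Complex.real_smul]
    push_cast
    rfl
end

section
/- For all x ∈ ℝ and all n ∈ ℕ, one has |J_n(x)| ≤ |x|^n / (2^n n!). In particular, for every x ∈ ℝ the series ∑_{n=0}^∞ |J_n(x)| converges. -/
/-!
The bound is proved by induction on `n`, from the differential recurrence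
`(x ^ (n + 1) * J_{n+1}(x))' = x ^ (n + 1) * J_n(x)` (`hasDerivAt_pow_mul_besselJ`).
Differentiating under the integral sign, this reduces to the vanishing of
`∫ (n + 1 - x cos θ) cos ((n + 1) θ - x sin θ)` over `[0, π]`, whose integrand is the
`θ`-derivative of `sin ((n + 1) θ - x sin θ)`.
Integrating the bound for `J_n` along the segment from `0` to `x` gives
`|x ^ (n + 1) * J_{n+1}(x)| ≤ |x| ^ (2 n + 2) / ((2 n + 2) * 2 ^ n * n!)`, which is the bound for
`J_{n+1}` after division by `|x| ^ (n + 1)`.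
Summability follows by comparison with the exponential series of `|x| / 2`.
-/

open Real

lemma hasDerivAt_besselJ (n : ℕ) (x : ℝ) :
    HasDerivAt (besselJ n)
      ((1 / π) * ∫ θ in (0:ℝ)..π, sin θ * sin (n * θ - x * sin θ)) x := by
  refine HasDerivAt.const_mul _ ?_
  refine (intervalIntegral.hasDerivAt_integral_of_dominated_loc_of_deriv_le
    (F := fun y θ => cos (n * θ - y * sin θ))
    (F' := fun y θ => sin θ * sin (n * θ - y * sin θ))
    (bound := fun _ => 1) (s := Set.univ) Filter.univ_mem ?_ ?_ ?_ ?_ ?_ ?_).2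
  · exact Filter.Eventually.of_forall fun y =>
      (by fun_prop : Continuous fun θ : ℝ => cos (n * θ - y * sin θ)).aestronglyMeasurable
  · exact (by fun_prop : Continuous fun θ : ℝ => cos (n * θ - x * sin θ)).intervalIntegrable _ _
  · exact (by fun_prop :
      Continuous fun θ : ℝ => sin θ * sin (n * θ - x * sin θ)).aestronglyMeasurable
  · refine Filter.Eventually.of_forall fun θ _ y _ => ?_
    rw [norm_mul]
    exact mul_le_one₀ (abs_sin_le_one _) (norm_nonneg _) (abs_sin_le_one _)
  · exact intervalIntegrable_const
  · refine Filter.Eventually.of_forall fun θ _ y _ => ?_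
    have h := (((hasDerivAt_id y).mul_const (sin θ)).const_sub (n * θ)).cos
    exact h.congr_deriv (by simp only [id]; ring)

/-- The integrand is the derivative of `sin (n θ - x sin θ)`, which vanishes at `0` and `π`. -/
lemma integral_phase_eq_zero (n : ℕ) (x : ℝ) :
    ∫ θ in (0:ℝ)..π, (n - x * cos θ) * cos (n * θ - x * sin θ) = 0 := by
  rw [intervalIntegral.integral_eq_sub_of_hasDerivAt
    (f := fun θ => sin (n * θ - x * sin θ))]
  · simp
  · intro θ _
    have h := (((hasDerivAt_id θ).const_mul (n : ℝ)).sub ((hasDerivAt_sin θ).const_mul x)).sin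
    exact h.congr_deriv (by simp only [Pi.sub_apply, id]; ring)
  · exact (by fun_prop : Continuous fun θ : ℝ =>
      (n - x * cos θ) * cos (n * θ - x * sin θ)).intervalIntegrable _ _

lemma besselJ_succ_zero (n : ℕ) : besselJ (n + 1) 0 = 0 := by
  have h := integral_phase_eq_zero (n + 1) 0
  simp only [zero_mul, sub_zero, intervalIntegral.integral_const_mul] at h
  have hn : ((n + 1 : ℕ) : ℝ) ≠ 0 := by positivity
  simp only [besselJ, zero_mul, sub_zero]
  rw [(mul_eq_zero.mp h).resolve_left hn, mul_zero]

lemma hasDerivAt_pow_mul_besselJ (n : ℕ) (x : ℝ) :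
    HasDerivAt (fun y => y ^ (n + 1) * besselJ (n + 1) y) (x ^ (n + 1) * besselJ n x) x := by
  have h := (hasDerivAt_pow (n + 1) x).mul (hasDerivAt_besselJ (n + 1) x)
  refine h.congr_deriv ?_
  have hi {f : ℝ → ℝ} (hf : Continuous f) : IntervalIntegrable f MeasureTheory.volume 0 π :=
    hf.intervalIntegrable _ _
  have key : x * (∫ θ in (0:ℝ)..π, cos (n * θ - x * sin θ)) =
      (n + 1 : ℕ) * (∫ θ in (0:ℝ)..π, cos ((n + 1 : ℕ) * θ - x * sin θ)) +
      x * ∫ θ in (0:ℝ)..π, sin θ * sin ((n + 1 : ℕ) * θ - x * sin θ) := by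
    have h0 := integral_phase_eq_zero (n + 1) x
    have e (θ : ℝ) : ((n + 1 : ℕ) - x * cos θ) * cos ((n + 1 : ℕ) * θ - x * sin θ) =
        (n + 1 : ℕ) * cos ((n + 1 : ℕ) * θ - x * sin θ) +
          x * (sin θ * sin ((n + 1 : ℕ) * θ - x * sin θ)) - x * cos (n * θ - x * sin θ) := by
      have e' : n * θ - x * sin θ = ((n + 1 : ℕ) * θ - x * sin θ) - θ := by push_cast; ring
      rw [e', cos_sub _ θ]
      ring
    simp only [e] at h0
    rw [intervalIntegral.integral_sub (hi (by fun_prop)) (hi (by fun_prop)),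
      intervalIntegral.integral_add (hi (by fun_prop)) (hi (by fun_prop))] at h0
    simp only [intervalIntegral.integral_const_mul] at h0
    linarith
  simp only [besselJ, Nat.add_sub_cancel]
  linear_combination (-(1 / π) * x ^ n) * key

lemma abs_besselJ_le (n : ℕ) (x : ℝ) :
    |besselJ n x| ≤ |x| ^ n / (2 ^ n * n.factorial) := by
  induction n generalizing x with
  | zero =>
    have h := intervalIntegral.norm_integral_le_of_norm_le_const (a := 0) (b := π) (C := 1)
      (f := fun θ => cos ((0 : ℕ) * θ - x * sin θ)) fun θ _ => abs_cos_le_one _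
    rw [sub_zero, abs_of_pos pi_pos, one_mul, norm_eq_abs] at h
    rw [besselJ, abs_mul, abs_of_pos (by positivity : 0 < 1 / π)]
    simp only [pow_zero, Nat.factorial_zero, Nat.cast_one, mul_one, div_one]
    calc 1 / π * _ ≤ 1 / π * π := by gcongr
      _ = 1 := by field_simp
  | succ n ih =>
    rcases eq_or_ne x 0 with rfl | hx
    · rw [besselJ_succ_zero, abs_zero]
      positivity
    have hx' : 0 < |x| := abs_pos.mpr hx
    set C : ℝ := |x| ^ (2 * n + 2) / (2 ^ n * n.factorial) with hC
    -- Parametrizing the segment from `0` to `x` treats both signs of `x` at once.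
    have hd (t : ℝ) : HasDerivAt (fun t => (t * x) ^ (n + 1) * besselJ (n + 1) (t * x))
        ((t * x) ^ (n + 1) * besselJ n (t * x) * x) t := by
      have h := (hasDerivAt_pow_mul_besselJ n (t * x)).comp t ((hasDerivAt_id t).mul_const x)
      simpa [Function.comp_def] using h
    have hB (t : ℝ) : HasDerivAt (fun t => C * (t ^ (2 * n + 2) / (2 * n + 2)))
        (C * t ^ (2 * n + 1)) t := by
      refine (((hasDerivAt_pow (2 * n + 2) t).div_const (2 * n + 2 : ℝ)).const_mul C).congr_deriv ?_
      have : (2 * n + 2 : ℝ) ≠ 0 := by positivity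
      push_cast
      field_simp
    have main := image_norm_le_of_norm_deriv_right_le_deriv_boundary (a := 0) (b := 1)
      (fun t _ => (hd t).continuousAt.continuousWithinAt)
      (fun t _ => (hd t).hasDerivWithinAt) (by simp) hB ?_
      (Set.right_mem_Icc.mpr zero_le_one)
    · simp only [one_mul, one_pow, norm_eq_abs, abs_mul, abs_pow] at main
      refine le_of_mul_le_mul_left (main.trans_eq ?_) (pow_pos hx' (n + 1))
      rw [hC, Nat.factorial_succ]
      push_cast
      field_simp
      ring
    · intro t ht
      have h := ih (t * x)
      rw [norm_eq_abs, abs_mul, abs_mul, abs_pow]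
      calc |t * x| ^ (n + 1) * |besselJ n (t * x)| * |x|
          ≤ |t * x| ^ (n + 1) * (|t * x| ^ n / (2 ^ n * n.factorial)) * |x| := by gcongr
        _ = C * t ^ (2 * n + 1) := by
          rw [abs_mul, abs_of_nonneg ht.1, hC]
          ring

/-- `|Jₙ(x)| ≤ |x|ⁿ / (2ⁿ n!)` for all `x` and `n`; in particular
`∑ₙ |Jₙ(x)|` converges for every `x`. -/
theorem besselJ_bound_and_summable :
    (∀ (x : ℝ) (n : ℕ), |besselJ n x| ≤ |x| ^ n / (2 ^ n * n.factorial)) ∧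
      ∀ x : ℝ, Summable fun n : ℕ => |besselJ n x| := by
  refine ⟨fun x n => abs_besselJ_le n x, fun x => ?_⟩
  refine Summable.of_nonneg_of_le (fun n => abs_nonneg _) (fun n => ?_)
    (Real.summable_pow_div_factorial (|x| / 2))
  rw [div_pow, div_div]
  exact abs_besselJ_le n x
end

section
/- For every n ∈ ℕ, the function x ↦ J_n(x) − √(2/(πx)) cos(x − nπ/2 − π/4) is O(x^{−3/2}) as x → +∞ (asymptotic along the filter atTop on ℝ). -/
/-!
The proof is the method of stationary phase with an explicit change of variable.

Centering the integral at the stationary point `θ = π/2` and substituting `cos φ = 1 - t²` turns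
`Jₙ(x)` into `2/π` times the real part of `e^{i(x - nπ/2)} ∫₀¹ f(t) e^{-ixt²} dt`, where
`f(t) = 2 Tₙ(1 - t²) / √(2 - t²)` (`besselJ_subst`). The phase is now exactly quadratic, and
`f(t) = √2 + t p(t)` with `p` of class `C²` on `[0, 1]` and `p 0 = 0` (`besselAmp_expand`).

The constant `√2` contributes a truncated Fresnel integral. Its value is obtained from the complex
Gaussian integral `∫₀^∞ e^{-bs²} ds` for `0 < Re b`, whose truncation error is estimated uniformly in
`b` (`gauss_partial`), by letting `b` tend to `ix` (`fresnel_partial`). The part `t p(t)` is integrated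
by parts once; what remains is `x⁻¹` times an integral of size `O(x^{-1/2})` (`vdc`).

Both parts leave endpoint terms of order `x⁻¹` at `t = 1`, which add up to a multiple of
`f(1) = 2 cos (nπ/2)`; the real part of that multiple is proportional to
`cos (nπ/2) sin (nπ/2) = 0`.
-/
open Real Filter Asymptotics

/-! ### Truncated Gaussian and Fresnel integrals -/

/-- The correction `e^{-bt²}/(2bt) - e^{-bt²}/(4b²t³)`: the first two terms of the expansion at
infinity of the tail `∫_t^∞ e^{-bs²} ds`, obtained by integrating by parts twice. -/
noncomputable def fresnelCorr (b : ℂ) (t : ℝ) : ℂ :=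
  Complex.exp (-b * (t:ℂ) ^ 2) / (2 * b * t) - Complex.exp (-b * (t:ℂ) ^ 2) / (4 * b ^ 2 * (t:ℂ) ^ 3)

lemma norm_cexp_le_one {b : ℂ} (hb : 0 ≤ b.re) (t : ℝ) : ‖Complex.exp (-b * (t:ℂ) ^ 2)‖ ≤ 1 := by
  rw [Complex.norm_exp, Real.exp_le_one_iff]
  have : (-b * (t:ℂ) ^ 2).re = -(b.re * t ^ 2) := by
    rw [← Complex.ofReal_pow, Complex.re_mul_ofReal]; simp
  rw [this]
  have := mul_nonneg hb (sq_nonneg t)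
  linarith

lemma hasDerivAt_cexp (b : ℂ) (t : ℝ) :
    HasDerivAt (fun t : ℝ => Complex.exp (-b * (t:ℂ) ^ 2))
      (Complex.exp (-b * (t:ℂ) ^ 2) * (-b * (2 * t))) t := by
  have h := (((hasDerivAt_id (t:ℂ)).pow 2).const_mul (-b)).cexp.comp_ofReal
  simpa using h

lemma continuous_cexp (b : ℂ) : Continuous (fun t : ℝ => Complex.exp (-b * (t:ℂ) ^ 2)) := by
  fun_prop

/-- With the corrections added, the truncated Gaussian integral has derivative `O(t⁻⁴)`, which is
integrable at infinity uniformly up to the imaginary axis in `b`. -/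
lemma hasDerivAt_fresnel (b : ℂ) (hb : b ≠ 0) {t : ℝ} (ht : 0 < t) :
    HasDerivAt (fun y : ℝ => (∫ s in (0:ℝ)..y, Complex.exp (-b * (s:ℂ) ^ 2)) + fresnelCorr b y)
      (3 * Complex.exp (-b * (t:ℂ) ^ 2) / (4 * b ^ 2 * (t:ℂ) ^ 4)) t := by
  have ht' : (t:ℂ) ≠ 0 := by exact_mod_cast ht.ne'
  have h1 : HasDerivAt (fun y : ℝ => (∫ s in (0:ℝ)..y, Complex.exp (-b * (s:ℂ) ^ 2)))
      (Complex.exp (-b * (t:ℂ) ^ 2)) t :=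
    intervalIntegral.integral_hasDerivAt_right ((continuous_cexp b).intervalIntegrable _ _)
      ((continuous_cexp b).stronglyMeasurableAtFilter _ _) (continuous_cexp b).continuousAt
  have h2 : HasDerivAt (fun y : ℝ => 2 * b * (y:ℂ)) (2 * b * 1) t :=
    ((hasDerivAt_id (t:ℂ)).const_mul (2 * b)).comp_ofReal
  have h3 : HasDerivAt (fun y : ℝ => 4 * b ^ 2 * (y:ℂ) ^ 3) (4 * b ^ 2 * (3 * (t:ℂ) ^ 2)) t := by
    simpa using (((hasDerivAt_id (t:ℂ)).pow 3).const_mul (4 * b ^ 2)).comp_ofReal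
  have h := h1.add (((hasDerivAt_cexp b t).div h2 (by simp [hb, ht'])).sub
    ((hasDerivAt_cexp b t).div h3 (by simp [hb, ht'])))
  refine h.congr_deriv ?_
  field_simp
  ring

lemma fresnel_cauchy {b : ℂ} (hb : 0 ≤ b.re) (hb0 : b ≠ 0) {y Y : ℝ} (hy : 0 < y) (hY : y ≤ Y) :
    ‖((∫ s in (0:ℝ)..Y, Complex.exp (-b * (s:ℂ) ^ 2)) + fresnelCorr b Y) -
      ((∫ s in (0:ℝ)..y, Complex.exp (-b * (s:ℂ) ^ 2)) + fresnelCorr b y)‖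
      ≤ 1 / (4 * ‖b‖ ^ 2 * y ^ 3) := by
  have hbn : 0 < ‖b‖ := norm_pos_iff.2 hb0
  have hd : ∀ s ∈ Set.Icc y Y, HasDerivAt (fun Y => ((∫ s in (0:ℝ)..Y, Complex.exp (-b * (s:ℂ) ^ 2)) + fresnelCorr b Y) -
      ((∫ s in (0:ℝ)..y, Complex.exp (-b * (s:ℂ) ^ 2)) + fresnelCorr b y)) _ s := fun s hs =>
    (hasDerivAt_fresnel b hb0 (hy.trans_le hs.1)).sub_const _
  have hB : ∀ s ∈ Set.Icc y Y, HasDerivAt (fun s : ℝ => 1 / (4 * ‖b‖ ^ 2) * (1 / y ^ 3 - 1 / s ^ 3))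
      (3 / (4 * ‖b‖ ^ 2 * s ^ 4)) s := fun s hs => by
    have hs0 : s ≠ 0 := (hy.trans_le hs.1).ne'
    have h := ((((hasDerivAt_const s (1:ℝ)).div (hasDerivAt_pow 3 s) (by positivity)).const_sub (1 / y ^ 3)).const_mul
      (1 / (4 * ‖b‖ ^ 2)))
    refine h.congr_deriv ?_
    simp
    field_simp
  have key := image_norm_le_of_norm_deriv_right_le_deriv_boundary'
    (fun s hs => (hd s hs).continuousAt.continuousWithinAt)
    (fun s hs => (hd s (Set.Ico_subset_Icc_self hs)).hasDerivWithinAt)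
    (B := fun s : ℝ => 1 / (4 * ‖b‖ ^ 2) * (1 / y ^ 3 - 1 / s ^ 3)) (by simp)
    (fun s hs => (hB s hs).continuousAt.continuousWithinAt)
    (fun s hs => (hB s (Set.Ico_subset_Icc_self hs)).hasDerivWithinAt)
    (fun s hs => by
      have hs0 : 0 < s := (hy.trans_le hs.1)
      have := norm_cexp_le_one hb s
      rw [norm_div, norm_mul, norm_mul, norm_mul, norm_pow, norm_pow, Complex.norm_real, Real.norm_of_nonneg hs0.le]
      simp only [Complex.norm_ofNat]
      gcongr
      linarith)
    (Set.right_mem_Icc.2 hY)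
  refine key.trans ?_
  have hY0 : 0 < Y := hy.trans_le hY
  have : 0 < 1 / Y ^ 3 := by positivity
  calc 1 / (4 * ‖b‖ ^ 2) * (1 / y ^ 3 - 1 / Y ^ 3) ≤ 1 / (4 * ‖b‖ ^ 2) * (1 / y ^ 3) := by
        gcongr; linarith
    _ = _ := by field_simp

lemma fresnelCorr_norm_le {b : ℂ} (hb : 0 ≤ b.re) (t : ℝ) (ht : 0 < t) :
    ‖fresnelCorr b t‖ ≤ 1 / (2 * ‖b‖ * t) + 1 / (4 * ‖b‖ ^ 2 * t ^ 3) := by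
  have := norm_cexp_le_one hb t
  refine (norm_sub_le _ _).trans ?_
  simp only [norm_div, norm_mul, norm_pow, Complex.norm_real, Real.norm_of_nonneg ht.le, Complex.norm_ofNat]
  gcongr

lemma tendsto_fresnelCorr {b : ℂ} (hb : 0 < b.re) : Tendsto (fresnelCorr b) atTop (nhds 0) := by
  have hbn : 0 < ‖b‖ := norm_pos_iff.2 (by rintro rfl; simp at hb)
  refine squeeze_zero_norm' (a := fun t : ℝ => (1 / (2 * ‖b‖) + 1 / (4 * ‖b‖ ^ 2)) * t⁻¹) ?_ ?_
  · filter_upwards [eventually_ge_atTop 1] with t ht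
    refine (fresnelCorr_norm_le hb.le t (by linarith)).trans ?_
    have h3 : t ≤ t ^ 3 := by nlinarith [mul_self_nonneg (t-1)]
    calc _ ≤ 1 / (2 * ‖b‖ * t) + 1 / (4 * ‖b‖ ^ 2 * t) := by gcongr
      _ = _ := by field_simp
  · have h := (tendsto_inv_atTop_zero (𝕜 := ℝ)).const_mul (1 / (2 * ‖b‖) + 1 / (4 * ‖b‖ ^ 2))
    rwa [mul_zero] at h

lemma gauss_partial {b : ℂ} (hb : 0 < b.re) {y : ℝ} (hy : 0 < y) :
    ‖((Real.pi:ℂ) / b) ^ (1 / 2 : ℂ) / 2 -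
      ((∫ s in (0:ℝ)..y, Complex.exp (-b * (s:ℂ) ^ 2)) + fresnelCorr b y)‖
      ≤ 1 / (4 * ‖b‖ ^ 2 * y ^ 3) := by
  have hb0 : b ≠ 0 := by rintro rfl; simp at hb
  have h := MeasureTheory.intervalIntegral_tendsto_integral_Ioi 0
    (integrable_cexp_neg_mul_sq hb).integrableOn tendsto_id
  rw [integral_gaussian_complex_Ioi hb] at h
  have h2 := ((h.add (tendsto_fresnelCorr hb)).sub_const
    ((∫ s in (0:ℝ)..y, Complex.exp (-b * (s:ℂ) ^ 2)) + fresnelCorr b y)).norm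
  rw [add_zero] at h2
  refine le_of_tendsto h2 ?_
  filter_upwards [eventually_ge_atTop y] with Y hY
  exact fresnel_cauchy hb.le hb0 hy hY

/-- The estimate `gauss_partial` survives the limit `b = ε + ix → ix`, although the improper integral
is then only conditionally convergent: this gives the Fresnel integral with an explicit error. -/
lemma fresnel_partial {x : ℝ} (hx : 0 < x) {y : ℝ} (hy : 0 < y) :
    ‖((Real.pi:ℂ) / (Complex.I * x)) ^ (1 / 2 : ℂ) / 2 -
      ((∫ s in (0:ℝ)..y, Complex.exp (-(Complex.I * x) * (s:ℂ) ^ 2)) + fresnelCorr (Complex.I * x) y)‖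
      ≤ 1 / (4 * x ^ 2 * y ^ 3) := by
  let β : ℝ → ℂ := fun ε => ε + Complex.I * x
  have hβ : Continuous β := by fun_prop
  have hβ0 : β 0 = Complex.I * x := by simp [β]
  have hx0 : (x:ℂ) ≠ 0 := by exact_mod_cast hx.ne'
  have hy0 : (y:ℂ) ≠ 0 := by exact_mod_cast hy.ne'
  have hne : β 0 ≠ 0 := by simp [hβ0, hx0]
  have c1 : ContinuousAt (fun ε => ((Real.pi:ℂ) / β ε) ^ (1 / 2 : ℂ) / 2) 0 := by
    refine ContinuousAt.div_const (ContinuousAt.cpow ?_ continuousAt_const ?_) _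
    · exact continuousAt_const.div hβ.continuousAt hne
    · rw [Complex.mem_slitPlane_iff]
      right
      rw [hβ0]
      have : (Real.pi:ℂ) / (Complex.I * x) = ((-(Real.pi / x) : ℝ) : ℂ) * Complex.I := by
        push_cast; field_simp; simp
      rw [this, Complex.im_ofReal_mul]
      simp [hx.ne', Real.pi_ne_zero]
  have c2 : ContinuousAt (fun ε => ∫ s in (0:ℝ)..y, Complex.exp (-β ε * (s:ℂ) ^ 2)) 0 :=
    (intervalIntegral.continuous_parametric_intervalIntegral_of_continuous
      (f := fun ε s => Complex.exp (-β ε * (s:ℂ) ^ 2)) (by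
        simp only [Function.uncurry_def]; fun_prop) continuous_const).continuousAt
  have c3 : ContinuousAt (fun ε => fresnelCorr (β ε) y) 0 := by
    unfold fresnelCorr
    refine ContinuousAt.sub (ContinuousAt.div ?_ ?_ ?_) (ContinuousAt.div ?_ ?_ ?_)
    all_goals first | fun_prop | simp_all
  have c4 : ContinuousAt (fun ε => 1 / (4 * ‖β ε‖ ^ 2 * y ^ 3)) 0 := by
    refine continuousAt_const.div (by fun_prop) ?_
    have := norm_pos_iff.2 hne
    positivity
  have := le_of_tendsto_of_tendsto (b := nhdsWithin (0:ℝ) (Set.Ioi 0))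
    ((c1.sub (c2.add c3)).norm.tendsto.mono_left nhdsWithin_le_nhds)
    (c4.tendsto.mono_left nhdsWithin_le_nhds) (by
      filter_upwards [self_mem_nhdsWithin] with ε hε
      exact gauss_partial (by simpa [β] using hε) hy)
  have hn : ‖Complex.I * (x:ℂ)‖ = x := by simp [abs_of_pos hx]
  simp only [Pi.sub_apply, Pi.add_apply] at this
  rwa [hβ0, hn] at this

lemma cpow_half_value {x : ℝ} (hx : 0 < x) :
    ((Real.pi:ℂ) / (Complex.I * x)) ^ (1 / 2 : ℂ) =
      (Real.sqrt (Real.pi / x) : ℂ) * Complex.exp (-(Real.pi / 4 : ℝ) * Complex.I) := by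
  have hx0 : (x:ℂ) ≠ 0 := by exact_mod_cast hx.ne'
  have h1 : (Real.pi:ℂ) / (Complex.I * x) =
      Complex.exp ((Real.log (Real.pi / x) : ℝ) + (-(Real.pi / 2 : ℝ) : ℝ) * Complex.I) := by
    rw [Complex.exp_add, ← Complex.ofReal_exp, Real.exp_log (by positivity), Complex.exp_mul_I,
      ← Complex.ofReal_cos, ← Complex.ofReal_sin, Real.cos_neg, Real.sin_neg, Real.cos_pi_div_two,
      Real.sin_pi_div_two]
    push_cast; field_simp; simp
  have h2 : Real.sqrt (Real.pi / x) = Real.exp (Real.log (Real.pi / x) / 2) := by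
    rw [Real.exp_half, Real.exp_log (by positivity)]
  rw [Complex.cpow_def_of_ne_zero (by simp [hx0, Real.pi_ne_zero]), h2, h1, Complex.log_exp,
    Complex.ofReal_exp, ← Complex.exp_add]
  · congr 1
    push_cast
    ring
  · simp; linarith [Real.pi_pos]
  · simp; linarith [Real.pi_pos]

lemma norm_main {x : ℝ} (hx : 0 < x) :
    ‖((Real.pi:ℂ) / (Complex.I * x)) ^ (1 / 2 : ℂ) / 2‖ ≤ 1 / √x := by
  have h : ‖Complex.exp (-(Real.pi / 4 : ℝ) * Complex.I)‖ = 1 := by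
    rw [← Complex.ofReal_neg, Complex.norm_exp_ofReal_mul_I]
  have h2 : √Real.pi ≤ 2 := Real.sqrt_le_iff.2 ⟨by norm_num, by linarith [Real.pi_le_four]⟩
  rw [cpow_half_value hx, norm_div, norm_mul, h, Complex.norm_real,
    Real.norm_of_nonneg (Real.sqrt_nonneg _), Real.sqrt_div Real.pi_pos.le, mul_one, Complex.norm_ofNat,
    div_div, mul_comm, ← div_div]
  gcongr
  linarith

/-- Uniform van der Corput bound: trivial for `t ≤ 1/√x`, and from `fresnel_partial` beyond. -/
lemma fresnel_bound {x : ℝ} (hx : 0 < x) {t : ℝ} (ht : 0 ≤ t) :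
    ‖∫ s in (0:ℝ)..t, Complex.exp (-(Complex.I * x) * (s:ℂ) ^ 2)‖ ≤ 2 / √x := by
  have hr : 0 < √x := Real.sqrt_pos.2 hx
  have hre : 0 ≤ (Complex.I * x).re := by simp
  have hn : ‖Complex.I * (x:ℂ)‖ = x := by simp [abs_of_pos hx]
  rcases le_total t (1 / √x) with h | h
  · have := intervalIntegral.norm_integral_le_of_norm_le_const (a := 0) (b := t)
      (fun s _ => norm_cexp_le_one hre s)
    rw [sub_zero, abs_of_nonneg ht, one_mul] at this
    refine (this.trans h).trans ?_
    gcongr; norm_num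
  · have ht0 : 0 < t := lt_of_lt_of_le (by positivity) h
    have h1 := fresnel_partial hx ht0
    have h2 := fresnelCorr_norm_le hre t ht0
    have h3 := norm_main hx
    rw [hn] at h2
    have e1 : 1 / (2 * x * t) ≤ 1 / 2 * (1 / √x) := by
      have : √x ≤ x * t := by
        rw [div_le_iff₀ hr] at h
        nlinarith [Real.mul_self_sqrt hx.le]
      calc _ = 1 / 2 * (1 / (x * t)) := by field_simp
        _ ≤ _ := by gcongr
    have e2 : 1 / (4 * x ^ 2 * t ^ 3) ≤ 1 / 4 * (1 / √x) := by
      have : √x ≤ x ^ 2 * t ^ 3 := by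
        rw [div_le_iff₀ hr] at h
        have e : x ^ 2 * t ^ 3 = √x * (t * √x) ^ 3 := by
          conv_lhs => rw [← Real.sq_sqrt hx.le]
          ring
        rw [e]
        exact le_mul_of_one_le_right hr.le (one_le_pow₀ h)
      calc _ = 1 / 4 * (1 / (x ^ 2 * t ^ 3)) := by field_simp
        _ ≤ _ := by gcongr
    set A := ((Real.pi:ℂ) / (Complex.I * x)) ^ (1 / 2 : ℂ) / 2
    set B := ∫ s in (0:ℝ)..t, Complex.exp (-(Complex.I * x) * (s:ℂ) ^ 2)
    set D := fresnelCorr (Complex.I * x) t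
    have : B = A - (A - (B + D)) - D := by ring
    rw [this]
    have h4 := norm_sub_le (A - (A - (B + D))) D
    have h5 := norm_sub_le A (A - (B + D))
    have : 2 / √x = 2 * (1 / √x) := by ring
    linarith

lemma fresnel_one {x : ℝ} (hx : 0 < x) :
    ‖(∫ s in (0:ℝ)..1, Complex.exp (-(Complex.I * x) * (s:ℂ) ^ 2)) -
      (((Real.pi:ℂ) / (Complex.I * x)) ^ (1 / 2 : ℂ) / 2
        - Complex.exp (-(Complex.I * x)) / (2 * (Complex.I * x)))‖ ≤ 1 / x ^ 2 := by
  have h1 := fresnel_partial hx one_pos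
  have hn : ‖Complex.I * (x:ℂ)‖ = x := by simp [abs_of_pos hx]
  have h2 := norm_cexp_le_one (b := Complex.I * x) (by simp) 1
  set A := ((Real.pi:ℂ) / (Complex.I * x)) ^ (1 / 2 : ℂ) / 2
  set B := ∫ s in (0:ℝ)..1, Complex.exp (-(Complex.I * x) * (s:ℂ) ^ 2)
  simp only [fresnelCorr, Complex.ofReal_one, one_pow, mul_one] at h1 h2
  set e := Complex.exp (-(Complex.I * x))
  have h3 : ‖e / (4 * (Complex.I * x) ^ 2)‖ ≤ 1 / (4 * x ^ 2) := by
    rw [norm_div, norm_mul, norm_pow, hn, Complex.norm_ofNat]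
    gcongr
  have : B - (A - e / (2 * (Complex.I * x))) = e / (4 * (Complex.I * x) ^ 2) -
    (A - (B + (e / (2 * (Complex.I * x)) - e / (4 * (Complex.I * x) ^ 2)))) := by ring
  rw [this]
  refine (norm_sub_le _ _).trans ((add_le_add h3 h1).trans ?_)
  have : 0 < 1 / x ^ 2 := by positivity
  have e : 1 / (4 * x ^ 2) = 1 / 4 * (1 / x ^ 2) := by field_simp
  linarith

/-! ### Oscillatory integrals with quadratic phase -/

/-- A `C¹` amplitude against the phase `x t²` gives `O(x^{-1/2})`: integrate by parts against the
uniformly bounded primitive of `fresnel_bound`. -/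
lemma vdc (m : ℝ → ℂ) (hm : ∀ t ∈ Set.Icc (0:ℝ) 1, ContDiffAt ℝ 1 m t) :
    ∃ C, 0 ≤ C ∧ ∀ x : ℝ, 0 < x →
      ‖∫ t in (0:ℝ)..1, m t * Complex.exp (-(Complex.I * x) * (t:ℂ) ^ 2)‖ ≤ C / √x := by
  have hcont : ContinuousOn (deriv m) (Set.Icc 0 1) := fun t ht =>
    ((hm t ht).derivWithin (m := 0) (by norm_num)).continuousAt.continuousWithinAt
  obtain ⟨K, hK⟩ := isCompact_Icc.exists_bound_of_continuousOn hcont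
  have hK0 : 0 ≤ K := (norm_nonneg _).trans (hK 0 (by simp))
  refine ⟨‖m 1‖ * 2 + K * 2, by positivity, fun x hx => ?_⟩
  have hr : 0 < √x := Real.sqrt_pos.2 hx
  have hE := continuous_cexp (Complex.I * x)
  have hE' : ∀ t : ℝ, HasDerivAt (fun y : ℝ => ∫ s in (0:ℝ)..y, Complex.exp (-(Complex.I * x) * (s:ℂ) ^ 2))
      (Complex.exp (-(Complex.I * x) * (t:ℂ) ^ 2)) t := fun t =>
    intervalIntegral.integral_hasDerivAt_right (hE.intervalIntegrable _ _)
      (hE.stronglyMeasurableAtFilter _ _) hE.continuousAt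
  have hu : Set.uIcc (0:ℝ) 1 = Set.Icc 0 1 := Set.uIcc_of_le zero_le_one
  rw [intervalIntegral.integral_mul_deriv_eq_deriv_mul (u' := deriv m)
    (fun t ht => ((hm t (hu ▸ ht)).differentiableAt (by norm_num)).hasDerivAt)
    (fun t _ => hE' t) ((hu ▸ hcont).intervalIntegrable) (hE.intervalIntegrable _ _)]
  rw [intervalIntegral.integral_same, mul_zero, sub_zero]
  have h1 : ‖m 1 * ∫ s in (0:ℝ)..1, Complex.exp (-(Complex.I * x) * (s:ℂ) ^ 2)‖ ≤ ‖m 1‖ * (2 / √x) := by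
    rw [norm_mul]
    gcongr
    exact fresnel_bound hx zero_le_one
  have h2 := intervalIntegral.norm_integral_le_of_norm_le_const (a := 0) (b := 1) (C := K * (2 / √x))
    (f := fun t => deriv m t * ∫ s in (0:ℝ)..t, Complex.exp (-(Complex.I * x) * (s:ℂ) ^ 2))
    (fun t ht => by
      rw [Set.uIoc_of_le zero_le_one] at ht
      rw [norm_mul]
      gcongr
      · exact hK t ⟨ht.1.le, ht.2⟩
      · exact fresnel_bound hx ht.1.le)
  refine (norm_sub_le _ _).trans ((add_le_add h1 h2).trans (le_of_eq ?_))
  norm_num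
  ring

/-- If the amplitude is `t p(t)` with `p 0 = 0`, the stationary point contributes nothing at order
`x^{-1/2}`: one integration by parts leaves the endpoint term at `1` and `x⁻¹` times an integral
controlled by `vdc`. -/
lemma regular_part (p : ℝ → ℂ) (hp : ∀ t ∈ Set.Icc (0:ℝ) 1, ContDiffAt ℝ 2 p t) (hp0 : p 0 = 0) :
    ∃ C, 0 ≤ C ∧ ∀ x : ℝ, 0 < x →
      ‖(∫ t in (0:ℝ)..1, p t * (t * Complex.exp (-(Complex.I * x) * (t:ℂ) ^ 2))) +
        p 1 * (Complex.exp (-(Complex.I * x)) / (2 * (Complex.I * x)))‖ ≤ C / (x * √x) := by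
  have hd : ∀ t ∈ Set.Icc (0:ℝ) 1, ContDiffAt ℝ 1 (deriv p) t := fun t ht =>
    (hp t ht).derivWithin (by norm_num)
  obtain ⟨C, hC0, hC⟩ := vdc (deriv p) hd
  refine ⟨C / 2, by positivity, fun x hx => ?_⟩
  have hx0 : (x:ℂ) ≠ 0 := by exact_mod_cast hx.ne'
  have hn : ‖Complex.I * (x:ℂ)‖ = x := by simp [abs_of_pos hx]
  have hE := continuous_cexp (Complex.I * x)
  have hu : Set.uIcc (0:ℝ) 1 = Set.Icc 0 1 := Set.uIcc_of_le zero_le_one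
  have hcont : ContinuousOn (deriv p) (Set.uIcc 0 1) := fun t ht =>
    (hd t (hu ▸ ht)).continuousAt.continuousWithinAt
  rw [intervalIntegral.integral_mul_deriv_eq_deriv_mul (u' := deriv p)
    (v := fun t : ℝ => Complex.exp (-(Complex.I * x) * (t:ℂ) ^ 2) * (-1 / (2 * (Complex.I * x))))
    (fun t ht => ((hp t (hu ▸ ht)).differentiableAt (by norm_num)).hasDerivAt)
    (fun t _ => ((hasDerivAt_cexp (Complex.I * x) t).mul_const _).congr_deriv (by
      field_simp))
    hcont.intervalIntegrable (Continuous.intervalIntegrable (by fun_prop) _ _)]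
  simp only [← mul_assoc]
  rw [intervalIntegral.integral_mul_const, hp0]
  have := hC x hx
  set J := ∫ t in (0:ℝ)..1, deriv p t * Complex.exp (-(Complex.I * x) * (t:ℂ) ^ 2)
  have e : ∀ E : ℂ, p 1 * E * (-1 / (2 * Complex.I * x)) - 0 - J * (-1 / (2 * Complex.I * x)) +
    p 1 * (E / (2 * Complex.I * x)) = J / (2 * (Complex.I * x)) := fun E => by
      ring
  simp only [Complex.ofReal_one, one_pow, mul_one, zero_mul]
  rw [e, norm_div, norm_mul, hn, Complex.norm_ofNat]
  calc ‖J‖ / (2 * x) ≤ (C / √x) / (2 * x) := by gcongr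
    _ = _ := by field_simp

/-- Stationary phase on `[0, 1]` for the amplitude `c + t p(t)`: the contribution of the stationary
point `0`, the endpoint term at `1`, and an error `O(x^{-3/2})`. -/
lemma stationary_phase (p : ℝ → ℂ) (hp : ∀ t ∈ Set.Icc (0:ℝ) 1, ContDiffAt ℝ 2 p t) (hp0 : p 0 = 0)
    (c : ℂ) : ∃ C, 0 ≤ C ∧ ∀ x : ℝ, 1 ≤ x →
      ‖(∫ t in (0:ℝ)..1, (c + t * p t) * Complex.exp (-(Complex.I * x) * (t:ℂ) ^ 2)) -
        (c * (((Real.pi:ℂ) / (Complex.I * x)) ^ (1 / 2 : ℂ) / 2) -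
        (c + p 1) * (Complex.exp (-(Complex.I * x)) / (2 * (Complex.I * x))))‖ ≤ C / (x * √x) := by
  obtain ⟨C, hC0, hC⟩ := regular_part p hp hp0
  refine ⟨‖c‖ + C, by positivity, fun x hx => ?_⟩
  have hx0 : 0 < x := by linarith
  have hE := continuous_cexp (Complex.I * x)
  have hu : Set.uIcc (0:ℝ) 1 = Set.Icc 0 1 := Set.uIcc_of_le zero_le_one
  have hcont : ContinuousOn p (Set.uIcc 0 1) := fun t ht =>
    (hp t (hu ▸ ht)).continuousAt.continuousWithinAt
  have hsplit : (∫ t in (0:ℝ)..1, (c + t * p t) * Complex.exp (-(Complex.I * x) * (t:ℂ) ^ 2)) =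
      c * (∫ t in (0:ℝ)..1, Complex.exp (-(Complex.I * x) * (t:ℂ) ^ 2)) +
      ∫ t in (0:ℝ)..1, p t * (t * Complex.exp (-(Complex.I * x) * (t:ℂ) ^ 2)) := by
    rw [← intervalIntegral.integral_const_mul, ← intervalIntegral.integral_add]
    · congr 1; ext t; ring
    · exact (hE.const_mul c).intervalIntegrable _ _
    · exact (hcont.mul (Continuous.continuousOn (by fun_prop))).intervalIntegrable
  have h1 := fresnel_one hx0
  have h2 := hC x hx0
  rw [hsplit]
  set B := ∫ t in (0:ℝ)..1, Complex.exp (-(Complex.I * x) * (t:ℂ) ^ 2)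
  set D := ∫ t in (0:ℝ)..1, p t * (t * Complex.exp (-(Complex.I * x) * (t:ℂ) ^ 2))
  set A := ((Real.pi:ℂ) / (Complex.I * x)) ^ (1 / 2 : ℂ) / 2
  set F := Complex.exp (-(Complex.I * x)) / (2 * (Complex.I * x))
  have e : c * B + D - (c * A - (c + p 1) * F) = c * (B - (A - F)) + (D + p 1 * F) := by ring
  rw [e]
  refine (norm_add_le _ _).trans ?_
  rw [norm_mul, add_div]
  refine add_le_add ?_ h2
  calc ‖c‖ * ‖B - (A - F)‖ ≤ ‖c‖ * (1 / x ^ 2) := by gcongr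
    _ ≤ ‖c‖ * (1 / (x * √x)) := by
      have : √x ≤ x := by
        rw [Real.sqrt_le_left hx0.le]; nlinarith
      rw [sq]; gcongr
    _ = _ := by ring

/-! ### Reduction of the Bessel integral -/

/-- The shift `θ = φ + π/2` followed by symmetrization in `φ`. -/
lemma besselJ_half (n : ℕ) (x : ℝ) :
    besselJ n x = (1 / Real.pi) *
      ∫ φ in (0:ℝ)..(Real.pi / 2), 2 * Real.cos (n * φ) * Real.cos (n * Real.pi / 2 - x * Real.cos φ) := by
  unfold besselJ
  congr 1
  have hc : Continuous fun φ : ℝ => Real.cos (n * (φ + Real.pi / 2) - x * Real.sin (φ + Real.pi / 2)) := by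
    fun_prop
  have h1 := intervalIntegral.integral_comp_add_right (a := -(Real.pi / 2)) (b := Real.pi / 2)
    (fun θ => Real.cos (n * θ - x * Real.sin θ)) (Real.pi / 2)
  rw [neg_add_cancel, add_halves] at h1
  have h2 := intervalIntegral.integral_comp_neg (a := 0) (b := Real.pi / 2)
    (fun φ : ℝ => Real.cos (n * (φ + Real.pi / 2) - x * Real.sin (φ + Real.pi / 2)))
  rw [neg_zero] at h2
  rw [← h1, ← intervalIntegral.integral_add_adjacent_intervals (b := 0)
    (hc.intervalIntegrable _ _) (hc.intervalIntegrable _ _), ← h2,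
    ← intervalIntegral.integral_add (Continuous.intervalIntegrable (by fun_prop) _ _)
      (hc.intervalIntegrable _ _)]
  refine intervalIntegral.integral_congr fun φ _ => ?_
  simp only [Real.sin_add_pi_div_two, Real.cos_neg]
  have e1 : n * (-φ + Real.pi / 2) - x * Real.cos φ = (n * Real.pi / 2 - x * Real.cos φ) - n * φ := by ring
  have e2 : n * (φ + Real.pi / 2) - x * Real.cos φ = (n * Real.pi / 2 - x * Real.cos φ) + n * φ := by ring
  rw [e1, e2, Real.cos_sub _ (n * φ), Real.cos_add _ (n * φ)]
  ring

/-- The amplitude of `Jₙ` after the substitution `t = √2 sin (φ / 2)`, i.e. `cos φ = 1 - t²`,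
written with the Chebyshev polynomial `Tₙ` so that `cos (n φ) = Tₙ(1 - t²)`. -/
noncomputable def besselAmp (n : ℕ) (t : ℝ) : ℝ :=
  2 * (Polynomial.Chebyshev.T ℝ n).eval (1 - t ^ 2) / √(2 - t ^ 2)

lemma besselJ_subst (n : ℕ) (x : ℝ) :
    besselJ n x = (2 / Real.pi) *
      ∫ t in (0:ℝ)..1, besselAmp n t * Real.cos (n * Real.pi / 2 - x * (1 - t ^ 2)) := by
  rw [besselJ_half]
  have hτ : ∀ φ : ℝ, HasDerivAt (fun φ => √2 * Real.sin (φ / 2)) (√2 * (Real.cos (φ / 2) * (1 / 2))) φ :=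
    fun φ => (((hasDerivAt_id φ).div_const 2).sin).const_mul _
  have hs2 : √2 * √2 = (2:ℝ) := Real.mul_self_sqrt (by norm_num)
  have himg : (fun φ => √2 * Real.sin (φ / 2)) '' Set.uIcc 0 (Real.pi / 2) ⊆ Set.Icc 0 1 := by
    rintro _ ⟨φ, hφ, rfl⟩
    rw [Set.uIcc_of_le (by positivity)] at hφ
    have h0 : 0 ≤ Real.sin (φ / 2) :=
      Real.sin_nonneg_of_nonneg_of_le_pi (by linarith [hφ.1]) (by linarith [hφ.2, Real.pi_pos])
    have h1 : Real.sin (φ / 2) ≤ Real.sin (Real.pi / 4) :=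
      Real.sin_le_sin_of_le_of_le_pi_div_two (by linarith [hφ.1, Real.pi_pos]) (by linarith [Real.pi_pos])
        (by linarith [hφ.2])
    rw [Real.sin_pi_div_four] at h1
    refine ⟨by positivity, ?_⟩
    show √2 * Real.sin (φ / 2) ≤ 1
    nlinarith [Real.sqrt_nonneg 2]
  have hg : ContinuousOn (fun t => besselAmp n t * Real.cos (n * Real.pi / 2 - x * (1 - t ^ 2))) (Set.Icc 0 1) := by
    unfold besselAmp
    refine ContinuousOn.mul (ContinuousOn.div ?_ ?_ ?_) ?_
    · exact (by fun_prop : Continuous _).continuousOn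
    · exact (by fun_prop : Continuous _).continuousOn
    · intro t ht
      have : 0 < 2 - t ^ 2 := by nlinarith [ht.1, ht.2]
      positivity
    · exact (by fun_prop : Continuous _).continuousOn
  have key := intervalIntegral.integral_comp_mul_deriv'' (a := 0) (b := Real.pi / 2)
    (fun φ _ => (hτ φ).continuousAt.continuousWithinAt) (fun φ _ => (hτ φ).hasDerivWithinAt)
    (Continuous.continuousOn (by fun_prop)) (hg.mono himg)
  have hb1 : √2 * Real.sin (Real.pi / 2 / 2) = 1 := by
    rw [show Real.pi / 2 / 2 = Real.pi / 4 by ring, Real.sin_pi_div_four]; linarith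
  simp only [zero_div, Real.sin_zero, mul_zero, hb1] at key
  rw [← key, div_mul_eq_mul_div, div_mul_eq_mul_div, one_mul, ← intervalIntegral.integral_const_mul]
  congr 1
  refine intervalIntegral.integral_congr fun φ hφ => ?_
  rw [Set.uIcc_of_le (by positivity)] at hφ
  have hcpos : 0 < Real.cos (φ / 2) := Real.cos_pos_of_mem_Ioo
    ⟨by linarith [hφ.1, Real.pi_pos], by linarith [hφ.2, Real.pi_pos]⟩
  have hsq : (√2 * Real.sin (φ / 2)) ^ 2 = 2 - 2 * Real.cos (φ / 2) ^ 2 := by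
    rw [mul_pow, Real.sq_sqrt (by norm_num), Real.sin_sq]; ring
  have hcos : 1 - (√2 * Real.sin (φ / 2)) ^ 2 = Real.cos φ := by
    rw [hsq]
    have := Real.cos_two_mul (φ / 2)
    rw [mul_div_cancel₀ φ two_ne_zero] at this
    linarith
  have hw : √(2 - (√2 * Real.sin (φ / 2)) ^ 2) = √2 * Real.cos (φ / 2) := by
    rw [hsq, sub_sub_cancel, Real.sqrt_mul (by norm_num), Real.sqrt_sq hcpos.le]
  simp only [Function.comp, besselAmp, hcos, hw, Polynomial.Chebyshev.T_real_cos]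
  push_cast
  field_simp

/-- The amplitude has value `√2` and no linear term at `t = 0`. The remainder is made explicit by
the factorization `Tₙ(1 - u) = 1 - u Q(1 - u)` and by
`2 / w - √2 = √2 t² / (w (√2 + w))` with `w = √(2 - t²)`. -/
lemma besselAmp_expand (n : ℕ) : ∃ p : ℝ → ℂ, (∀ t ∈ Set.Icc (0:ℝ) 1, ContDiffAt ℝ 2 p t) ∧ p 0 = 0 ∧
    ∀ t ∈ Set.Icc (0:ℝ) 1, (besselAmp n t : ℂ) = (√2 : ℝ) + t * p t := by
  obtain ⟨Q, hQ⟩ : Polynomial.X - Polynomial.C 1 ∣ Polynomial.Chebyshev.T ℝ n - 1 := by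
    rw [Polynomial.dvd_iff_isRoot]; simp
  have hQ' : ∀ u, (Polynomial.Chebyshev.T ℝ n).eval (1 - u) = 1 - u * Q.eval (1 - u) := fun u => by
    have := congrArg (Polynomial.eval (1 - u)) hQ
    simp at this
    linarith
  refine ⟨fun t => ((t * (-2 * Q.eval (1 - t ^ 2) / √(2 - t ^ 2) +
    √2 / (√(2 - t ^ 2) * (√2 + √(2 - t ^ 2)))) : ℝ) : ℂ), fun t ht => ?_, by simp, fun t ht => ?_⟩
  · have hpos : 0 < 2 - t ^ 2 := by nlinarith [ht.1, ht.2]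
    have hw : ContDiffAt ℝ 2 (fun t : ℝ => √(2 - t ^ 2)) t :=
      ContDiffAt.sqrt (by fun_prop) hpos.ne'
    have hQc : ContDiffAt ℝ 2 (fun t : ℝ => Q.eval (1 - t ^ 2)) t := by
      have : ContDiff ℝ 2 (fun t : ℝ => Q.eval t) := by
        simpa using Q.contDiff_aeval (𝕜 := ℝ) 2
      exact (this.comp (by fun_prop : ContDiff ℝ 2 (fun t : ℝ => 1 - t ^ 2))).contDiffAt
    refine Complex.ofRealCLM.contDiff.contDiffAt.comp t ?_
    refine contDiffAt_id.mul (((contDiffAt_const.mul hQc).div hw ?_).add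
      (contDiffAt_const.div (hw.mul (contDiffAt_const.add hw)) ?_)) <;> positivity
  · have hpos : 0 < 2 - t ^ 2 := by nlinarith [ht.1, ht.2]
    have hw := Real.sq_sqrt hpos.le
    have h2 : √2 ^ 2 = (2:ℝ) := Real.sq_sqrt (by norm_num)
    have hwp : 0 < √(2 - t ^ 2) := Real.sqrt_pos.2 hpos
    have h2p : 0 < √(2:ℝ) := by positivity
    rw [← Complex.ofReal_mul, ← Complex.ofReal_add]
    congr 1
    rw [besselAmp, hQ']
    set w := √(2 - t ^ 2)
    set r := √(2:ℝ)
    have ht2 : t ^ 2 = (r - w) * (r + w) := by nlinarith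
    field_simp
    linear_combination (-r) * ht2 - (r + w) * h2

/-! ### The asymptotic formula -/

/-- The asymptotic form of `Jₙ`:
`Jₙ(x) - √(2/(πx)) cos (x - nπ/2 - π/4) = O(x^{-3/2})` as `x → +∞`. -/
theorem besselJ_asymptotic (n : ℕ) :
    (fun x : ℝ =>
        besselJ n x - Real.sqrt (2 / (Real.pi * x)) *
          Real.cos (x - n * Real.pi / 2 - Real.pi / 4))
      =O[atTop] fun x : ℝ => x ^ (-(3 / 2) : ℝ) := by
  obtain ⟨p, hp, hp0, hpe⟩ := besselAmp_expand n
  obtain ⟨C, hC0, hC⟩ := stationary_phase p hp hp0 (√2 : ℝ)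
  refine IsBigO.of_bound (2 / Real.pi * C) ?_
  filter_upwards [eventually_ge_atTop 1] with x hx
  have hx0 : 0 < x := by linarith
  have hxc : (x:ℂ) ≠ 0 := by exact_mod_cast hx0.ne'
  have hpow : x ^ (-(3 / 2) : ℝ) = 1 / (x * √x) := by
    rw [Real.rpow_neg hx0.le, show (3 / 2 : ℝ) = 1 + 1 / 2 by norm_num, Real.rpow_add hx0,
      Real.rpow_one, ← Real.sqrt_eq_rpow, one_div]
  have hbd := hC x hx
  set a : ℝ := n * Real.pi / 2 with ha
  have hu : Set.uIcc (0:ℝ) 1 = Set.Icc 0 1 := Set.uIcc_of_le zero_le_one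
  have hcont : ContinuousOn p (Set.uIcc 0 1) := fun t ht =>
    (hp t (hu ▸ ht)).continuousAt.continuousWithinAt
  set I := ∫ t in (0:ℝ)..1, ((√2 : ℝ) + t * p t) * Complex.exp (-(Complex.I * x) * (t:ℂ) ^ 2) with hI
  set M := ((√2 : ℝ) : ℂ) * (((Real.pi:ℂ) / (Complex.I * x)) ^ (1 / 2 : ℂ) / 2) -
        (((√2 : ℝ) : ℂ) + p 1) * (Complex.exp (-(Complex.I * x)) / (2 * (Complex.I * x))) with hM
  set ω := Complex.exp ((x - a : ℝ) * Complex.I) with hω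
  have hJ : besselJ n x = 2 / Real.pi * (ω * I).re := by
    rw [besselJ_subst, hI, ← intervalIntegral.integral_const_mul ω]
    congr 1
    rw [← Complex.reCLM_apply, ← ContinuousLinearMap.intervalIntegral_comp_comm]
    · refine intervalIntegral.integral_congr fun t ht => ?_
      simp only [Complex.reCLM_apply]
      rw [← hpe t (hu ▸ ht), mul_left_comm, hω, ← Complex.exp_add, Complex.re_ofReal_mul]
      congr 1
      rw [show ((x - a : ℝ) : ℂ) * Complex.I + -(Complex.I * x) * (t:ℂ) ^ 2 =
        ((-(a - x * (1 - t ^ 2)) : ℝ) : ℂ) * Complex.I by push_cast; ring,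
        Complex.exp_ofReal_mul_I_re, Real.cos_neg]
    · refine ContinuousOn.intervalIntegrable ?_
      refine continuousOn_const.mul (ContinuousOn.mul (continuousOn_const.add
        (Continuous.continuousOn (by fun_prop) |>.mul hcont)) (Continuous.continuousOn (by fun_prop)))
  have hend : ((√2 : ℝ) : ℂ) + p 1 = ((2 * Real.cos a : ℝ) : ℂ) := by
    have h := hpe 1 (by simp)
    rw [Complex.ofReal_one, one_mul] at h
    rw [← h]
    congr 1
    have := Polynomial.Chebyshev.T_real_cos (Real.pi / 2) n
    rw [Real.cos_pi_div_two] at this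
    rw [besselAmp]
    norm_num
    rw [this, ha]
    congr 1
    push_cast
    ring
  -- The endpoint terms at `t = 1` cancel: their real part is a multiple of `cos a * sin a`,
  -- which vanishes as `2 * a = n * π`.
  have hMre : 2 / Real.pi * (ω * M).re = Real.sqrt (2 / (Real.pi * x)) * Real.cos (x - a - Real.pi / 4) := by
    have e1 : ω * M = ((√2 * √(Real.pi / x) / 2 : ℝ) : ℂ) *
        Complex.exp ((x - a - Real.pi / 4 : ℝ) * Complex.I) +
        ((Real.cos a / x : ℝ) : ℂ) * (Complex.I * Complex.exp ((-a : ℝ) * Complex.I)) := by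
      rw [hM, hend, cpow_half_value hx0, mul_sub, sub_eq_add_neg]
      congr 1
      · rw [show ((x - a - Real.pi / 4 : ℝ) : ℂ) * Complex.I = (x - a : ℝ) * Complex.I +
          -(Real.pi / 4 : ℝ) * Complex.I by push_cast; ring, Complex.exp_add, ← hω]
        push_cast
        ring
      · rw [show ((-a : ℝ) : ℂ) * Complex.I = (x - a : ℝ) * Complex.I +
          -(Complex.I * x) by push_cast; ring, Complex.exp_add, ← hω]
        push_cast
        field_simp
        rw [Complex.I_sq]
        ring
    have hs : Real.cos a * Real.sin a = 0 := by
      have := Real.sin_two_mul a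
      rw [ha, show 2 * (n * Real.pi / 2) = n * Real.pi by ring, Real.sin_nat_mul_pi, ← ha] at this
      linarith
    have e2 : √(2 / (Real.pi * x)) = 2 / Real.pi * (√2 * √(Real.pi / x) / 2) := by
      rw [← Real.sqrt_mul (by norm_num)]
      rw [show 2 / Real.pi * (√(2 * (Real.pi / x)) / 2) = 1 / Real.pi * √(2 * (Real.pi / x)) by ring]
      rw [Real.sqrt_eq_iff_mul_self_eq (by positivity) (by positivity)]
      rw [mul_mul_mul_comm, Real.mul_self_sqrt (by positivity)]
      field_simp
    rw [e1, Complex.add_re, Complex.re_ofReal_mul, Complex.re_ofReal_mul, Complex.exp_ofReal_mul_I_re,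
      Complex.I_mul_re, Complex.exp_ofReal_mul_I_im, Real.sin_neg, neg_neg, e2,
      div_mul_eq_mul_div (Real.cos a), hs]
    ring
  have hωn : ‖ω‖ = 1 := Complex.norm_exp_ofReal_mul_I _
  rw [hJ, ← hMre, ← mul_sub, ← Complex.sub_re, ← mul_sub, norm_mul, hpow,
    Real.norm_of_nonneg (by positivity : 0 ≤ 2 / Real.pi),
    Real.norm_of_nonneg (by positivity : 0 ≤ 1 / (x * √x)), mul_assoc]
  gcongr
  calc ‖(ω * (I - M)).re‖ ≤ ‖ω * (I - M)‖ := Complex.abs_re_le_norm _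
    _ = ‖I - M‖ := by rw [norm_mul, hωn, one_mul]
    _ ≤ C / (x * √x) := hbd
    _ = _ := by ring
end

section
/- For every n ∈ ℕ there exists a constant C > 0 such that for all real x ≥ 1, |J_n(x)| ≤ C / √x. -/
/-!
The bound is the stationary phase estimate for the phase `φ θ = n θ - x sin θ`, treating `n θ` as
a harmless amplitude. Away from `π / 2`, where `cos θ ≠ 0`, the function
`F θ = -sin (φ θ) / (x cos θ)` is an approximate primitive of `cos (φ θ)`: the error
`cos (φ θ) - F' θ` is at most `(n + 1) / (x cos² θ)`, whose primitive is `(n + 1) tan θ / x`.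
Hence (`abs_integral_le_of_cos_ne_zero`) the integrals over `[0, π/2 - δ]` and `[π/2 + δ, π]` are
at most `(n + 3) / (x sin δ)`, while the middle interval contributes at most its length `2 δ`.
The choice `δ = 1 / √x`, together with `sin δ ≥ 2 δ / π`, balances the two contributions.
-/

open Real

/-- Nonstationary estimate, by one integration by parts against `x cos θ`. -/
theorem abs_integral_le_of_cos_ne_zero (n : ℕ) {x a b : ℝ} (hx : 0 < x) (hab : a ≤ b)
    (hc : ∀ θ ∈ Set.Icc a b, cos θ ≠ 0) :
    |∫ θ in a..b, cos (n * θ - x * sin θ)| ≤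
      1 / (x * |cos a|) + 1 / (x * |cos b|) + (n + 1) / x * (tan b - tan a) := by
  set F : ℝ → ℝ := fun θ => -(sin (n * θ - x * sin θ) / (x * cos θ)) with hF
  set R : ℝ → ℝ := fun θ => n / (x * cos θ) * cos (n * θ - x * sin θ)
    + sin (n * θ - x * sin θ) * sin θ / (x * cos θ ^ 2) with hR
  have hI : Set.uIcc a b = Set.Icc a b := Set.uIcc_of_le hab
  have hx0 := hx.ne'
  have hRc : ContinuousOn R (Set.uIcc a b) := by
    rw [hI]
    refine ContinuousOn.add (ContinuousOn.mul (ContinuousOn.div ?_ ?_ ?_) ?_)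
      (ContinuousOn.div ?_ ?_ ?_) <;> first | fun_prop | skip
    · intro θ hθ; exact mul_ne_zero hx0 (hc θ hθ)
    · intro θ hθ; exact mul_ne_zero hx0 (pow_ne_zero 2 (hc θ hθ))
  have hfc : ContinuousOn (fun θ => cos (n * θ - x * sin θ)) (Set.uIcc a b) := by fun_prop
  have hFd : ∀ θ ∈ Set.uIcc a b, HasDerivAt F (cos (n * θ - x * sin θ) - R θ) θ := by
    intro θ hθ
    have h0 := hc θ (hI ▸ hθ)
    have h1 : HasDerivAt (fun θ : ℝ => n * θ - x * sin θ) (n * 1 - x * cos θ) θ :=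
      ((hasDerivAt_id θ).const_mul (n : ℝ)).sub ((hasDerivAt_sin θ).const_mul x)
    have h2 := (h1.sin.div ((hasDerivAt_cos θ).const_mul x) (mul_ne_zero hx0 h0)).neg
    refine h2.congr_deriv ?_
    simp only [hR]
    field_simp
    ring
  have hsec : ContinuousOn (fun θ => (n + 1) / x * (1 / cos θ ^ 2)) (Set.uIcc a b) := by
    rw [hI]
    refine ContinuousOn.mul (by fun_prop) (ContinuousOn.div (by fun_prop) (by fun_prop) ?_)
    intro θ hθ; exact pow_ne_zero 2 (hc θ hθ)
  have e1 : ∫ θ in a..b, (cos (n * θ - x * sin θ) - R θ) = F b - F a :=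
    intervalIntegral.integral_eq_sub_of_hasDerivAt hFd (hfc.sub hRc).intervalIntegrable
  rw [intervalIntegral.integral_sub hfc.intervalIntegrable hRc.intervalIntegrable] at e1
  have e2 : ∫ θ in a..b, (n + 1) / x * (1 / cos θ ^ 2) = (n + 1) / x * tan b - (n + 1) / x * tan a :=
    intervalIntegral.integral_eq_sub_of_hasDerivAt (f := fun θ => (n + 1) / x * tan θ)
      (fun θ hθ => (hasDerivAt_tan (hc θ (hI ▸ hθ))).const_mul _) hsec.intervalIntegrable
  have hRb : |∫ θ in a..b, R θ| ≤ ∫ θ in a..b, (n + 1) / x * (1 / cos θ ^ 2) := by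
    refine (intervalIntegral.abs_integral_le_integral_abs hab).trans ?_
    refine intervalIntegral.integral_mono_on hab hRc.abs.intervalIntegrable
      hsec.intervalIntegrable fun θ hθ => ?_
    have h0 : 0 < |cos θ| := abs_pos.2 (hc θ hθ)
    have hle := abs_cos_le_one θ
    have hs : |sin (n * θ - x * sin θ)| * |sin θ| ≤ 1 :=
      mul_le_one₀ (abs_sin_le_one _) (abs_nonneg _) (abs_sin_le_one _)
    have hcc : |cos (n * θ - x * sin θ)| * |cos θ| ≤ 1 :=
      mul_le_one₀ (abs_cos_le_one _) (abs_nonneg _) (abs_cos_le_one _)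
    calc |R θ| ≤ n / (x * |cos θ|) * |cos (n * θ - x * sin θ)|
        + |sin (n * θ - x * sin θ)| * |sin θ| / (x * |cos θ| ^ 2) := by
          refine (abs_add_le _ _).trans (le_of_eq ?_)
          simp only [abs_mul, abs_div, abs_pow, abs_of_pos hx, Nat.abs_cast]
      _ = (n * (|cos (n * θ - x * sin θ)| * |cos θ|)
          + |sin (n * θ - x * sin θ)| * |sin θ|) / (x * |cos θ| ^ 2) := by
          field_simp
      _ ≤ (n * 1 + 1) / (x * |cos θ| ^ 2) := by gcongr
      _ = (n + 1) / x * (1 / cos θ ^ 2) := by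
          rw [sq_abs]; have := hc θ hθ; field_simp
  have hFb : ∀ θ, |F θ| ≤ 1 / (x * |cos θ|) := by
    intro θ
    simp only [hF, abs_neg, abs_div, abs_mul, abs_of_pos hx]
    gcongr
    exact abs_sin_le_one _
  have e3 : ∫ θ in a..b, cos (n * θ - x * sin θ) = F b - F a + ∫ θ in a..b, R θ := by linarith
  rw [e3]
  have := abs_add_le (F b - F a) (∫ θ in a..b, R θ)
  have := abs_sub (F b) (F a)
  have := hFb a
  have := hFb b
  linarith

/-- For every `n` there is `C > 0` with `|Jₙ(x)| ≤ C / √x` for all `x ≥ 1`. -/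
theorem besselJ_decay (n : ℕ) :
    ∃ C > 0, ∀ x : ℝ, 1 ≤ x → |besselJ n x| ≤ C / Real.sqrt x := by
  refine ⟨2 * (1 + (n + 3) * π), by positivity, fun x hx => ?_⟩
  have hx0 : 0 < x := by linarith
  have hr1 : 1 ≤ √x := Real.one_le_sqrt.2 hx
  have hr0 : 0 < √x := by linarith
  have hrr : √x * √x = x := Real.mul_self_sqrt hx0.le
  have hpi := Real.pi_gt_three
  set δ := 1 / √x with hδ
  have hδ0 : 0 < δ := by positivity
  have hδ1 : δ ≤ 1 := by rw [hδ, div_le_one hr0]; exact hr1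
  have hs : 2 / π * δ ≤ sin δ := Real.mul_le_sin hδ0.le (by linarith)
  have hs0 : 0 < sin δ := lt_of_lt_of_le (by positivity) hs
  have hs1 := sin_le_one δ
  have hA := abs_integral_le_of_cos_ne_zero n (a := 0) (b := π / 2 - δ) hx0 (by linarith)
    fun θ hθ => (cos_pos_of_mem_Ioo ⟨by linarith [hθ.1], by linarith [hθ.2]⟩).ne'
  have hB := abs_integral_le_of_cos_ne_zero n (a := π / 2 + δ) (b := π) hx0 (by linarith)
    fun θ hθ => (cos_neg_of_pi_div_two_lt_of_lt (by linarith [hθ.1]) (by linarith [hθ.2])).ne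
  have hM : |∫ θ in (π / 2 - δ)..(π / 2 + δ), cos (n * θ - x * sin θ)| ≤ 2 * δ := by
    have := intervalIntegral.norm_integral_le_of_norm_le_const (a := π / 2 - δ) (b := π / 2 + δ)
      (f := fun θ => cos (n * θ - x * sin θ)) (C := 1) fun θ _ => abs_cos_le_one _
    rwa [Real.norm_eq_abs, one_mul, show π / 2 + δ - (π / 2 - δ) = 2 * δ by ring,
      abs_of_pos (by linarith : 0 < 2 * δ)] at this
  have hc1 : cos (π / 2 + δ) = -sin δ := by rw [add_comm, cos_add_pi_div_two]
  have hs2 : sin (π / 2 + δ) = cos δ := by rw [add_comm, sin_add_pi_div_two]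
  rw [tan_eq_sin_div_cos, tan_zero, sin_pi_div_two_sub, cos_pi_div_two_sub, cos_zero, abs_one,
    abs_of_pos hs0] at hA
  rw [tan_pi, tan_eq_sin_div_cos, hc1, hs2, cos_pi, abs_neg, abs_neg, abs_one, abs_of_pos hs0,
    div_neg, zero_sub, neg_neg] at hB
  have hbd : 1 / (x * 1) + 1 / (x * sin δ) + (n + 1) / x * (cos δ / sin δ) ≤
      (n + 3) * π / 2 / √x := by
    calc 1 / (x * 1) + 1 / (x * sin δ) + (n + 1) / x * (cos δ / sin δ)
        = (sin δ + 1 + (n + 1) * cos δ) / (x * sin δ) := by field_simp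
      _ ≤ (1 + 1 + (n + 1) * 1) / (x * (2 / π * δ)) := by
          gcongr
          exact cos_le_one δ
      _ = (n + 3) * π / 2 / √x := by
          rw [hδ]; nth_rewrite 1 [← hrr]; field_simp; ring
  have hint : ∀ a b : ℝ, IntervalIntegrable (fun θ => cos (n * θ - x * sin θ))
      MeasureTheory.volume a b := fun a b => Continuous.intervalIntegrable (by fun_prop) a b
  have hsplit := intervalIntegral.integral_add_adjacent_intervals
    ((hint 0 (π / 2 - δ)).trans (hint _ (π / 2 + δ))) (hint _ π)
  rw [← intervalIntegral.integral_add_adjacent_intervals (hint 0 (π / 2 - δ))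
    (hint _ (π / 2 + δ))] at hsplit
  have htot : |∫ θ in (0:ℝ)..π, cos (n * θ - x * sin θ)| ≤
      2 * (1 + (n + 3) * π) / √x := by
    rw [← hsplit]
    refine (abs_add_three _ _ _).trans ?_
    have e : 2 * (1 + (n + 3) * π) / √x
        = 2 * δ + 4 * ((n + 3) * π / 2 / √x) := by rw [hδ]; ring
    have : 0 ≤ (n + 3) * π / 2 / √x := by positivity
    rw [sub_zero] at hA
    linarith
  rw [besselJ, abs_mul, abs_of_pos (by positivity : 0 < 1 / π)]
  refine (mul_le_of_le_one_left (abs_nonneg _) ?_).trans htot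
  rw [div_le_one pi_pos]; linarith
end

section
/- There exists a constant C > 0 such that for all real numbers r > 0 and 0 < k₁ ≤ k_F with k₁·r ≥ 1, one has ∫_{k₁}^{k_F} J_1(k r)² dk ≤ (C/r)·log(k_F/k₁). -/
/-!
The bound follows from the pointwise decay `|J₁(x)| ≤ 2 / √x` for `x ≥ 1`, since
`∫ dk / (k r) = log (kF / k₁) / r`.

For the decay, expand `cos (θ - x sin θ)`. The part `cos θ cos (x sin θ)` is an exact derivative
with vanishing integral, and the symmetry `θ ↦ π - θ` gives
`J₁(x) = (2/π) ∫_0^{π/2} sin θ sin (x sin θ) dθ`. The phase `x sin θ` is stationary only at `π/2`,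
so the integral is cut at `π/2 - 1/√x`. The short piece is at most `1/√x`. On the long one,
`sin θ sin (x sin θ) = x⁻¹ tan θ · d/dθ (-cos (x sin θ))`, and integrating by parts bounds it by
`2 tan (π/2 - 1/√x) / x ≤ 2/√x`.
-/

open Real

lemma continuous_besselJ (n : ℕ) : Continuous (besselJ n) := by
  unfold besselJ
  refine continuous_const.mul ?_
  exact intervalIntegral.continuous_parametric_intervalIntegral_of_continuous'
    (f := fun x θ : ℝ => Real.cos (n * θ - x * Real.sin θ)) (by fun_prop) _ _

lemma besselJ_one_eq (x : ℝ) (hx : x ≠ 0) :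
    besselJ 1 x = (2 / π) * ∫ θ in (0:ℝ)..(π / 2), sin θ * sin (x * sin θ) := by
  have hi : ∀ a b : ℝ, IntervalIntegrable (fun θ => sin θ * sin (x * sin θ)) MeasureTheory.volume
      a b := fun a b => Continuous.intervalIntegrable (by fun_prop) _ _
  have h1 : ∫ θ in (0:ℝ)..π, cos θ * cos (x * sin θ) = 0 := by
    have hd : ∀ θ ∈ Set.uIcc 0 π, HasDerivAt (fun θ => sin (x * sin θ) / x)
        (cos θ * cos (x * sin θ)) θ := by
      intro θ _
      refine (((hasDerivAt_sin θ).const_mul x).sin.div_const x).congr_deriv ?_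
      field_simp
    rw [intervalIntegral.integral_eq_sub_of_hasDerivAt hd
      (Continuous.intervalIntegrable (by fun_prop) _ _)]
    simp
  have h2 : ∫ θ in (π / 2)..π, sin θ * sin (x * sin θ)
      = ∫ θ in (0:ℝ)..(π / 2), sin θ * sin (x * sin θ) := by
    have h := intervalIntegral.integral_comp_sub_left (a := 0) (b := π / 2)
      (fun θ => sin θ * sin (x * sin θ)) π
    simp only [sin_pi_sub, sub_zero] at h
    rw [h]
    congr 1
    ring
  have h3 : ∫ θ in (0:ℝ)..π, cos ((1 : ℕ) * θ - x * sin θ)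
      = (∫ θ in (0:ℝ)..π, cos θ * cos (x * sin θ)) + ∫ θ in (0:ℝ)..π, sin θ * sin (x * sin θ) := by
    rw [← intervalIntegral.integral_add (Continuous.intervalIntegrable (by fun_prop) _ _) (hi _ _)]
    congr 1
    ext θ
    rw [Nat.cast_one, one_mul, cos_sub]
  unfold besselJ
  rw [h3, h1, ← intervalIntegral.integral_add_adjacent_intervals (hi 0 (π / 2)) (hi (π / 2) π), h2]
  ring

/-- The non-stationary part of the integral, estimated by one integration by parts. -/
lemma abs_integral_sin_le_tan (x a : ℝ) (hx : 0 < x) (ha : 0 ≤ a) (ha' : a < π / 2) :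
    |∫ θ in (0:ℝ)..a, sin θ * sin (x * sin θ)| ≤ 2 * tan a / x := by
  have hcos : ∀ θ ∈ Set.uIcc 0 a, cos θ ≠ 0 := by
    intro θ hθ
    rw [Set.uIcc_of_le ha] at hθ
    exact (cos_pos_of_mem_Ioo ⟨by linarith [hθ.1, pi_pos], by linarith [hθ.2]⟩).ne'
  have hu : ∀ θ ∈ Set.uIcc 0 a, HasDerivAt tan (1 / cos θ ^ 2) θ :=
    fun θ hθ => hasDerivAt_tan (hcos θ hθ)
  have hv : ∀ θ ∈ Set.uIcc 0 a, HasDerivAt (fun θ => -cos (x * sin θ))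
      (sin (x * sin θ) * (x * cos θ)) θ := by
    intro θ _
    refine ((hasDerivAt_sin θ).const_mul x).cos.neg.congr_deriv ?_
    ring
  have hsec : IntervalIntegrable (fun θ => 1 / cos θ ^ 2) MeasureTheory.volume 0 a :=
    ContinuousOn.intervalIntegrable
      (continuousOn_const.div (by fun_prop) fun θ hθ => pow_ne_zero 2 (hcos θ hθ))
  have hparts := intervalIntegral.integral_mul_deriv_eq_deriv_mul hu hv hsec
    (Continuous.intervalIntegrable (by fun_prop) _ _)
  have hbd : |∫ θ in (0:ℝ)..a, 1 / cos θ ^ 2 * -cos (x * sin θ)| ≤ tan a := by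
    have h : |∫ θ in (0:ℝ)..a, 1 / cos θ ^ 2 * -cos (x * sin θ)|
        ≤ ∫ θ in (0:ℝ)..a, 1 / cos θ ^ 2 := by
      rw [← Real.norm_eq_abs]
      refine intervalIntegral.norm_integral_le_of_norm_le ha
        (Filter.Eventually.of_forall fun θ _ => ?_) hsec
      rw [Real.norm_eq_abs, abs_mul, abs_neg, abs_of_nonneg (by positivity : 0 ≤ 1 / cos θ ^ 2)]
      exact mul_le_of_le_one_right (by positivity) (abs_cos_le_one _)
    rwa [intervalIntegral.integral_eq_sub_of_hasDerivAt hu hsec, tan_zero, sub_zero] at h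
  have heq : ∫ θ in (0:ℝ)..a, tan θ * (sin (x * sin θ) * (x * cos θ))
      = x * ∫ θ in (0:ℝ)..a, sin θ * sin (x * sin θ) := by
    rw [← intervalIntegral.integral_const_mul]
    refine intervalIntegral.integral_congr fun θ hθ => ?_
    have := tan_mul_cos (hcos θ hθ)
    linear_combination x * sin (x * sin θ) * this
  have htan : 0 ≤ tan a := tan_nonneg_of_nonneg_of_le_pi_div_two ha ha'.le
  have hb : |tan a * -cos (x * sin a)| ≤ tan a := by
    rw [abs_mul, abs_neg, abs_of_nonneg htan]
    exact mul_le_of_le_one_right htan (abs_cos_le_one _)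
  rw [heq, tan_zero, zero_mul, sub_zero] at hparts
  rw [le_div_iff₀ hx, mul_comm, ← abs_of_pos hx, ← abs_mul, abs_of_pos hx, hparts]
  linarith [abs_sub (tan a * -cos (x * sin a))
    (∫ θ in (0:ℝ)..a, 1 / cos θ ^ 2 * -cos (x * sin θ))]

lemma abs_besselJ_one_le (x : ℝ) (hx : 1 ≤ x) : |besselJ 1 x| ≤ 2 / √x := by
  have hx0 : 0 < x := by linarith
  have hs : 1 ≤ √x := one_le_sqrt.mpr hx
  have hs0 : 0 < √x := by linarith
  have hδ : 0 < 1 / √x := by positivity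
  have hδ1 : 1 / √x ≤ 1 := by rw [div_le_one hs0]; exact hs
  have hpi := pi_gt_three
  set a := π / 2 - 1 / √x with ha
  have htan : tan a ≤ √x := by
    rw [ha, tan_pi_div_two_sub]
    have := le_tan hδ.le (by linarith : 1 / √x < π / 2)
    exact inv_le_of_inv_le₀ hs0 (by rwa [one_div] at this ⊢)
  have h1 := abs_integral_sin_le_tan x a hx0 (by linarith) (by linarith)
  have h1' : 2 * tan a / x ≤ 2 / √x := by
    rw [div_le_div_iff₀ hx0 hs0]
    nlinarith [mul_self_sqrt hx0.le]
  have h2 : |∫ θ in a..(π / 2), sin θ * sin (x * sin θ)| ≤ 1 / √x := by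
    have h := intervalIntegral.norm_integral_le_of_norm_le_const (a := a) (b := π / 2) (C := 1)
      (f := fun θ => sin θ * sin (x * sin θ)) (fun θ _ => by
        rw [Real.norm_eq_abs, abs_mul]
        exact mul_le_one₀ (abs_sin_le_one _) (abs_nonneg _) (abs_sin_le_one _))
    rwa [Real.norm_eq_abs, one_mul, ha, sub_sub_cancel, abs_of_pos hδ] at h
  have hi : ∀ a b : ℝ, IntervalIntegrable (fun θ => sin θ * sin (x * sin θ)) MeasureTheory.volume
      a b := fun a b => Continuous.intervalIntegrable (by fun_prop) _ _
  rw [besselJ_one_eq x hx0.ne', ← intervalIntegral.integral_add_adjacent_intervals (hi 0 a) (hi _ _),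
    abs_mul, abs_of_pos (by positivity : 0 < 2 / π)]
  have h3 : |(∫ θ in (0:ℝ)..a, sin θ * sin (x * sin θ))
      + ∫ θ in a..(π / 2), sin θ * sin (x * sin θ)| ≤ 3 / √x := by
    refine (abs_add_le _ _).trans ?_
    have : 3 / √x = 2 / √x + 1 / √x := by ring
    linarith
  calc _ ≤ 2 / π * (3 / √x) := by gcongr
    _ ≤ 2 / 3 * (3 / √x) := by gcongr
    _ = 2 / √x := by ring

/-- There is `C > 0` such that for `r > 0`, `0 < k₁ ≤ k_F` with `k₁ r ≥ 1`,
`∫_{k₁}^{k_F} J₁(kr)² dk ≤ (C/r) log (k_F/k₁)`. -/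
theorem integral_besselJ_one_sq_bound :
    ∃ C > 0, ∀ r k₁ kF : ℝ, 0 < r → 0 < k₁ → k₁ ≤ kF → 1 ≤ k₁ * r →
      ∫ k in k₁..kF, besselJ 1 (k * r) ^ 2 ≤ (C / r) * Real.log (kF / k₁) := by
  refine ⟨4, by norm_num, fun r k₁ kF hr hk hkF hkr => ?_⟩
  have hne : ∀ k ∈ Set.uIcc k₁ kF, k ≠ 0 := by
    intro k hk'
    rw [Set.uIcc_of_le hkF] at hk'
    exact (hk.trans_le hk'.1).ne'
  have hlog : ∫ k in k₁..kF, (4 / r) * k⁻¹ = (4 / r) * Real.log (kF / k₁) := by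
    rw [intervalIntegral.integral_const_mul, integral_inv_of_pos hk (hk.trans_le hkF)]
  rw [← hlog]
  refine intervalIntegral.integral_mono_on hkF
    (Continuous.intervalIntegrable
      (((continuous_besselJ 1).comp (continuous_id.mul continuous_const)).pow 2) _ _)
    (ContinuousOn.intervalIntegrable (continuousOn_const.mul (continuousOn_id.inv₀ hne)))
    fun k hk' => ?_
  have hk0 : 0 < k := hk.trans_le hk'.1
  have hx : 1 ≤ k * r := hkr.trans (by gcongr; exact hk'.1)
  calc besselJ 1 (k * r) ^ 2 = |besselJ 1 (k * r)| ^ 2 := (sq_abs _).symm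
    _ ≤ (2 / √(k * r)) ^ 2 := by gcongr; exact abs_besselJ_one_le _ hx
    _ = 4 / r * k⁻¹ := by
      rw [div_pow, sq_sqrt (by positivity)]
      field_simp
      norm_num
end
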